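/- arXiv:1807.00928 — 2 statements merged into one kernel-verified Lean document; each statement's English description precedes it below -/
import Mathlib

section
/- For every R > 0 and every ρ with R/2 ≤ ρ < e^{-1/2} R, there exists a constant C > 0, depending only on R and ρ, such that for every smooth subharmonic function ψ on the open disk B_R(0) ⊆ ℂ satisfying ψ(0) ≥ -1 and ψ ≤ 0 on B_R(0), one has ∫_{B_ρ(0)} e^{-ψ} dA ≤ C. -/
open MeasureTheory

/-- The Laplacian `Δf = ∂²f/∂x² + ∂²f/∂y²` of a function `f : ℂ → ℝ`, expressed via
iterated directional (Fréchet) derivatives in the directions `1` and `i`. -/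
noncomputable def laplacian (f : ℂ → ℝ) (z : ℂ) : ℝ :=
  fderiv ℝ (fun w => fderiv ℝ f w 1) z 1 +
    fderiv ℝ (fun w => fderiv ℝ f w Complex.I) z Complex.I

/-!
Jensen's formula `⨍_{|ζ - z| = r} ψ = ψ z + (2π)⁻¹ ∫_{B_r(z)} log (r / |ζ - z|) Δψ ζ dA` comes from
integrating `Δψ` in polar coordinates: the angular part of the Laplacian has mean zero over circles,
and the radial part is an exact derivative along each ray once multiplied by `log (r / s)`.

At the origin, `ψ 0 ≥ -1` and `ψ ≤ 0` turn it into `log (r / t) ν(B_t) ≤ 1` for the Riesz measure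
`ν = (2π)⁻¹ Δψ dA` and `t < r < R`. For `ρ < t < e^{-1/2} R` and `r` close to `R` this makes the
mass of `ν` on `B_t` at most some `m < 2`.

Near a point `z` of `B_ρ`, averaging the formula over the radii below `δ = t - ρ`, and comparing the
integrals of `ψ` over `B_δ(z)` and `B_t`, bounds `-ψ z` by a constant plus the logarithmic potential
at `z` of `ν` restricted to `B_t`. The exponential of that potential is integrable, with a bound
depending only on `m`, `δ` and `ρ`, because `|x|^{-m}` is locally integrable in the plane.
-/

open Metric Real Set

section SecondDerivative

variable {E F : Type*} [NormedAddCommGroup E] [NormedSpace ℝ E] [NormedAddCommGroup F]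
  [NormedSpace ℝ F] {f : E → F} {U : Set E} {w : E}

lemma contDiffOn_one_fderiv (hf : ContDiffOn ℝ 2 f U) (hU : IsOpen U) :
    ContDiffOn ℝ 1 (fderiv ℝ f) U :=
  hf.fderiv_of_isOpen hU (by norm_num)

lemma hasFDerivAt_fderiv_of_contDiffOn_two (hf : ContDiffOn ℝ 2 f U) (hU : IsOpen U)
    (hw : w ∈ U) : HasFDerivAt (fderiv ℝ f) (fderiv ℝ (fderiv ℝ f) w) w :=
  (((contDiffOn_one_fderiv hf hU).differentiableOn one_ne_zero).differentiableAt
    (hU.mem_nhds hw)).hasFDerivAt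

lemma continuousOn_fderiv_fderiv (hf : ContDiffOn ℝ 2 f U) (hU : IsOpen U) :
    ContinuousOn (fderiv ℝ (fderiv ℝ f)) U :=
  (contDiffOn_one_fderiv hf hU).continuousOn_fderiv_of_isOpen hU le_rfl

end SecondDerivative

section Laplacian

variable {ψ : ℂ → ℝ} {U : Set ℂ} {w : ℂ}

lemma laplacian_eq_fderiv_fderiv (h : DifferentiableAt ℝ (fderiv ℝ ψ) w) :
    laplacian ψ w = fderiv ℝ (fderiv ℝ ψ) w 1 1 +
      fderiv ℝ (fderiv ℝ ψ) w Complex.I Complex.I := by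
  simp [laplacian, fderiv_clm_apply h (differentiableAt_const _)]

lemma bilinear_trace_eq_of_norm_eq_one (T : ℂ →L[ℝ] ℂ →L[ℝ] ℝ) {u : ℂ} (hu : ‖u‖ = 1) :
    T u u + T (u * Complex.I) (u * Complex.I) = T 1 1 + T Complex.I Complex.I := by
  have hu_eq : u = u.re • (1 : ℂ) + u.im • Complex.I := by simp
  have huI_eq : u * Complex.I = (-u.im) • (1 : ℂ) + u.re • Complex.I := by
    apply Complex.ext <;> simp
  have hu_sq : u.re * u.re + u.im * u.im = 1 := by
    rw [← Complex.normSq_apply, Complex.normSq_eq_norm_sq, hu, one_pow]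
  rw [huI_eq]
  nth_rewrite 1 2 [hu_eq]
  simp only [map_add, map_smul, add_apply, smul_apply, smul_eq_mul]
  linear_combination (T 1 1 + T Complex.I Complex.I) * hu_sq

lemma measurable_laplacian (ψ : ℂ → ℝ) : Measurable (laplacian ψ) :=
  (measurable_fderiv_apply_const ℝ _ _).add (measurable_fderiv_apply_const ℝ _ _)

lemma continuousOn_laplacian (hψ : ContDiffOn ℝ 2 ψ U) (hU : IsOpen U) :
    ContinuousOn (laplacian ψ) U := by
  have hD := continuousOn_fderiv_fderiv hψ hU
  have hD_apply (v : ℂ) : ContinuousOn (fun w => fderiv ℝ (fderiv ℝ ψ) w v v) U :=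
    (hD.clm_apply continuousOn_const).clm_apply continuousOn_const
  exact ((hD_apply 1).add (hD_apply Complex.I)).congr fun w hw =>
    laplacian_eq_fderiv_fderiv (hasFDerivAt_fderiv_of_contDiffOn_two hψ hU hw).differentiableAt

end Laplacian

section PolarCoordinates

variable {E : Type*} [NormedAddCommGroup E] [NormedSpace ℝ E]

lemma setIntegral_ball_eq_setIntegral_polar (f : ℂ → E) (z : ℂ) (r : ℝ) :
    ∫ ζ in ball z r, f ζ =
      ∫ p in Ioo 0 r ×ˢ Ioo (-π) π, p.1 • f (circleMap z p.1 p.2) := by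
  have hsymm (p : ℝ × ℝ) : z + Complex.polarCoord.symm p = circleMap z p.1 p.2 := by
    simp [circleMap, Complex.polarCoord_symm_apply, Complex.exp_mul_I]
  have hinter : polarCoord.target ∩ Iio r ×ˢ univ = Ioo 0 r ×ˢ Ioo (-π) π := by
    rw [polarCoord_target, prod_inter_prod, Ioi_inter_Iio, inter_univ]
  rw [← integral_indicator measurableSet_ball, ← integral_add_left_eq_self _ z,
    ← Complex.integral_comp_polarCoord_symm, ← hinter,
    ← setIntegral_indicator (measurableSet_Iio.prod .univ)]
  refine setIntegral_congr_fun polarCoord.open_target.measurableSet fun p hp => ?_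
  have hmem : circleMap z p.1 p.2 ∈ ball z r ↔ p ∈ Iio r ×ˢ (univ : Set ℝ) := by
    simp [circleMap, abs_of_pos (show 0 < p.1 from hp.1)]
  simp only [hsymm, indicator, hmem, smul_ite, smul_zero]

lemma setIntegral_Ioo_circleMap (f : ℂ → E) (z : ℂ) (r : ℝ) :
    ∫ θ in Ioo (-π) π, f (circleMap z r θ) = (2 * π) • circleAverage f z r := by
  have hperiodic : (fun θ => f (circleMap z r θ)).Periodic (2 * π) :=
    (periodic_circleMap z r).comp f
  have hshift := hperiodic.intervalIntegral_add_eq (-π) 0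
  rw [show -π + 2 * π = π by ring, zero_add] at hshift
  rw [circleAverage_def, smul_inv_smul₀ two_pi_pos.ne', ← hshift,
    intervalIntegral.integral_of_le (by linarith [pi_pos]), integral_Ioc_eq_integral_Ioo]

lemma mapsTo_circleMap_closedBall (z : ℂ) (r : ℝ) (T : Set ℝ) :
    MapsTo (fun p : ℝ × ℝ => circleMap z p.1 p.2) (Icc 0 r ×ˢ T) (closedBall z r) :=
  fun p hp => closedBall_subset_closedBall hp.1.2 (circleMap_mem_closedBall z hp.1.1 p.2)

lemma setIntegral_ball_eq_integral_circleAverage {f : ℂ → E} {z : ℂ} {r : ℝ}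
    (hr : 0 ≤ r) (hf : ContinuousOn f (closedBall z r)) :
    ∫ ζ in ball z r, f ζ = ∫ s in 0..r, (2 * π * s) • circleAverage f z s := by
  have hcont : ContinuousOn (fun p : ℝ × ℝ => p.1 • f (circleMap z p.1 p.2))
      (Icc 0 r ×ˢ Icc (-π) π) :=
    continuousOn_fst.smul (hf.comp (by unfold circleMap; fun_prop)
      (mapsTo_circleMap_closedBall z r _))
  have hint : IntegrableOn (fun p : ℝ × ℝ => p.1 • f (circleMap z p.1 p.2))
      (Ioo 0 r ×ˢ Ioo (-π) π) :=
    (hcont.integrableOn_compact (isCompact_Icc.prod isCompact_Icc)).mono_set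
      (prod_mono Ioo_subset_Icc_self Ioo_subset_Icc_self)
  rw [setIntegral_ball_eq_setIntegral_polar, Measure.volume_eq_prod, setIntegral_prod _ hint,
    intervalIntegral.integral_of_le hr, integral_Ioc_eq_integral_Ioo]
  refine setIntegral_congr_fun measurableSet_Ioo fun s _ => ?_
  simp only [integral_smul, setIntegral_Ioo_circleMap, smul_smul, mul_comm]

lemma setIntegral_ball_le_of_circleAverage_le {f : ℂ → ℝ} {z : ℂ} {r b : ℝ} (hr : 0 ≤ r)
    (hf : ContinuousOn f (closedBall z r)) (hb : ∀ s ∈ Ioo 0 r, circleAverage f z s ≤ b) :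
    ∫ ζ in ball z r, f ζ ≤ π * r ^ 2 * b := by
  have hsub : {ζ : ℂ | ‖ζ - z‖ ∈ Icc 0 r} ⊆ closedBall z r := fun ζ hζ =>
    mem_closedBall_iff_norm.2 hζ.2
  have havg : ContinuousOn (circleAverage f z) (Icc 0 r) :=
    (hf.mono hsub).circleAverage fun _ hs => hs.1
  rw [setIntegral_ball_eq_integral_circleAverage hr hf]
  calc ∫ s in 0..r, (2 * π * s) • circleAverage f z s
      ≤ ∫ s in 0..r, (2 * π * s) • b := by
        refine intervalIntegral.integral_mono_on_of_le_Ioo hr ?_ ?_ fun s hs => ?_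
        · exact ContinuousOn.intervalIntegrable_of_Icc hr (by fun_prop)
        · exact Continuous.intervalIntegrable (by fun_prop) _ _
        · exact mul_le_mul_of_nonneg_left (hb s hs) (by have := hs.1; positivity)
    _ = π * r ^ 2 * b := by
        simp only [smul_eq_mul, intervalIntegral.integral_mul_const]
        rw [intervalIntegral.integral_const_mul, integral_id]
        ring

end PolarCoordinates

section JensenFormula

variable {ψ : ℂ → ℝ} {U : Set ℂ} {z : ℂ} {r : ℝ}

/-- `∂ₛ (s ∂ₛ F)` for `F s θ = ψ (z + s e^{iθ})`: the radial part of `s • Δψ` in polar coordinates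
around `z`. -/
noncomputable def polarRadialPart (ψ : ℂ → ℝ) (z : ℂ) (s θ : ℝ) : ℝ :=
  fderiv ℝ ψ (circleMap z s θ) (circleMap 0 1 θ) +
    s * fderiv ℝ (fderiv ℝ ψ) (circleMap z s θ) (circleMap 0 1 θ) (circleMap 0 1 θ)

/-- `s⁻¹ ∂²F/∂θ²` for `F s θ = ψ (z + s e^{iθ})`: the angular part of `s • Δψ` in polar coordinates
around `z`, in the form that stays regular at `s = 0`. -/
noncomputable def polarAngularPart (ψ : ℂ → ℝ) (z : ℂ) (s θ : ℝ) : ℝ :=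
  s * fderiv ℝ (fderiv ℝ ψ) (circleMap z s θ) (circleMap 0 1 θ * Complex.I)
    (circleMap 0 1 θ * Complex.I) - fderiv ℝ ψ (circleMap z s θ) (circleMap 0 1 θ)

lemma polarRadialPart_add_polarAngularPart (hψ : ContDiffOn ℝ 2 ψ U) (hU : IsOpen U) {s θ : ℝ}
    (hmem : circleMap z s θ ∈ U) :
    polarRadialPart ψ z s θ + polarAngularPart ψ z s θ = s * laplacian ψ (circleMap z s θ) := by
  rw [laplacian_eq_fderiv_fderiv
      (hasFDerivAt_fderiv_of_contDiffOn_two hψ hU hmem).differentiableAt,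
    ← bilinear_trace_eq_of_norm_eq_one _ (u := circleMap 0 1 θ) (by simp),
    polarRadialPart, polarAngularPart]
  ring

lemma continuousOn_polarRadialPart (hψ : ContDiffOn ℝ 2 ψ U) (hU : IsOpen U) {Q : Set (ℝ × ℝ)}
    (hQ : MapsTo (fun p => circleMap z p.1 p.2) Q U) :
    ContinuousOn (fun p => polarRadialPart ψ z p.1 p.2) Q := by
  have hW : ContinuousOn (fun p : ℝ × ℝ => circleMap z p.1 p.2) Q := by
    unfold circleMap; fun_prop
  have hu : ContinuousOn (fun p : ℝ × ℝ => circleMap 0 1 p.2) Q := by fun_prop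
  have hD := (contDiffOn_one_fderiv hψ hU).continuousOn.comp hW hQ
  have hD2 := (continuousOn_fderiv_fderiv hψ hU).comp hW hQ
  exact (hD.clm_apply hu).add (continuousOn_fst.mul ((hD2.clm_apply hu).clm_apply hu))

lemma continuousOn_polarAngularPart (hψ : ContDiffOn ℝ 2 ψ U) (hU : IsOpen U) {Q : Set (ℝ × ℝ)}
    (hQ : MapsTo (fun p => circleMap z p.1 p.2) Q U) :
    ContinuousOn (fun p => polarAngularPart ψ z p.1 p.2) Q := by
  have hW : ContinuousOn (fun p : ℝ × ℝ => circleMap z p.1 p.2) Q := by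
    unfold circleMap; fun_prop
  have hu : ContinuousOn (fun p : ℝ × ℝ => circleMap 0 1 p.2) Q := by fun_prop
  have huI : ContinuousOn (fun p : ℝ × ℝ => circleMap 0 1 p.2 * Complex.I) Q := by fun_prop
  have hD := (contDiffOn_one_fderiv hψ hU).continuousOn.comp hW hQ
  have hD2 := (continuousOn_fderiv_fderiv hψ hU).comp hW hQ
  exact (continuousOn_fst.mul ((hD2.clm_apply huI).clm_apply huI)).sub (hD.clm_apply hu)

lemma hasDerivAt_circleMap_radius (z : ℂ) (s θ : ℝ) :
    HasDerivAt (fun s => circleMap z s θ) (circleMap 0 1 θ) s := by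
  simpa [circleMap] using
    ((Complex.ofRealCLM.hasDerivAt (x := s)).mul_const (Complex.exp (θ * Complex.I))).const_add z

lemma hasDerivAt_fderiv_circleMap_tangent (hψ : ContDiffOn ℝ 2 ψ U) (hU : IsOpen U) {s θ : ℝ}
    (hmem : circleMap z s θ ∈ U) :
    HasDerivAt (fun θ => fderiv ℝ ψ (circleMap z s θ) (circleMap 0 1 θ * Complex.I))
      (polarAngularPart ψ z s θ) θ := by
  have hD := (hasFDerivAt_fderiv_of_contDiffOn_two hψ hU hmem).comp_hasDerivAt θ
    (hasDerivAt_circleMap z s θ)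
  have htangent := (hasDerivAt_circleMap 0 1 θ).mul_const Complex.I
  refine (hD.clm_apply htangent).congr_deriv ?_
  have hsmul : circleMap 0 s θ * Complex.I = s • (circleMap 0 1 θ * Complex.I) := by
    simp [circleMap, mul_assoc]
  have hI : circleMap 0 1 θ * Complex.I * Complex.I = -circleMap 0 1 θ := by
    rw [mul_assoc, Complex.I_mul_I, mul_neg_one]
  rw [hsmul, hI, polarAngularPart, map_smul, map_neg, smul_apply, smul_eq_mul,
    ← sub_eq_add_neg]
  rfl

lemma integral_polarAngularPart (hψ : ContDiffOn ℝ 2 ψ U) (hU : IsOpen U)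
    (hsub : closedBall z r ⊆ U) {s : ℝ} (hs : s ∈ Icc 0 r) :
    ∫ θ in (-π)..π, polarAngularPart ψ z s θ = 0 := by
  have hmem (θ : ℝ) : circleMap z s θ ∈ U :=
    hsub (mapsTo_circleMap_closedBall z r univ (x := (s, θ)) ⟨hs, mem_univ θ⟩)
  have hcont : Continuous (polarAngularPart ψ z s) :=
    continuousOn_univ.1 <| (continuousOn_polarAngularPart hψ hU (Q := {s} ×ˢ univ)
      (by rintro ⟨_, θ⟩ ⟨rfl, -⟩; exact hmem θ)).comp
      (f := fun θ => (s, θ)) (by fun_prop) (by simp [MapsTo])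
  have hperiodic (c : ℂ) (a : ℝ) : circleMap c a π = circleMap c a (-π) := by
    simpa [two_mul] using periodic_circleMap c a (-π)
  rw [intervalIntegral.integral_eq_sub_of_hasDerivAt
      (fun θ _ => hasDerivAt_fderiv_circleMap_tangent hψ hU (hmem θ))
      (hcont.intervalIntegrable _ _), hperiodic, hperiodic, sub_self]

lemma intervalIntegrable_log_div (r a b : ℝ) :
    IntervalIntegrable (fun s => log (r / s)) volume a b := by
  rcases eq_or_ne r 0 with rfl | hr
  · simp
  · have hdiff : IntervalIntegrable (fun s => log r - log s) volume a b := by simp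
    refine hdiff.congr_ae (ae_restrict_of_ae ?_)
    filter_upwards [(countable_singleton (0 : ℝ)).ae_notMem volume] with s hs
    exact (log_div hr hs).symm

lemma integral_log_div_mul_deriv_id_mul_deriv {f f' f'' : ℝ → ℝ} (hr : 0 ≤ r)
    (hf : ∀ s ∈ Icc 0 r, HasDerivAt f (f' s) s) (hf' : ∀ s ∈ Icc 0 r, HasDerivAt f' (f'' s) s)
    (hf'' : ContinuousOn f'' (Icc 0 r)) :
    ∫ s in 0..r, log (r / s) * (f' s + s * f'' s) = f r - f 0 := by
  have hf_cont : ContinuousOn f (Icc 0 r) := fun s hs => (hf s hs).continuousAt.continuousWithinAt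
  have hf'_cont : ContinuousOn f' (Icc 0 r) := fun s hs =>
    (hf' s hs).continuousAt.continuousWithinAt
  have hprim_cont : ContinuousOn (fun s => (s * log r - s * log s) * f' s + f s) (Icc 0 r) :=
    (((by fun_prop : Continuous fun s => s * log r).sub
      continuous_mul_log).continuousOn.mul hf'_cont).add hf_cont
  have hprim_deriv : ∀ s ∈ Ioo 0 r, HasDerivAt (fun s => (s * log r - s * log s) * f' s + f s)
      (log (r / s) * (f' s + s * f'' s)) s := by
    intro s hs
    have hs' := Ioo_subset_Icc_self hs
    refine ((((hasDerivAt_mul_const (log r)).sub (hasDerivAt_mul_log hs.1.ne')).mul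
      (hf' s hs')).add (hf s hs')).congr_deriv ?_
    rw [Pi.sub_apply, log_div (hs.1.trans hs.2).ne' hs.1.ne']
    ring
  have hint : IntervalIntegrable (fun s => log (r / s) * (f' s + s * f'' s)) volume 0 r :=
    (intervalIntegrable_log_div r 0 r).mul_continuousOn <| by
      rw [uIcc_of_le hr]
      exact hf'_cont.add (continuousOn_id.mul hf'')
  rw [intervalIntegral.integral_eq_sub_of_hasDerivAt_of_le hr hprim_cont hprim_deriv hint]
  simp

lemma integral_log_div_mul_polarRadialPart (hψ : ContDiffOn ℝ 2 ψ U) (hU : IsOpen U)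
    (hr : 0 ≤ r) (hsub : closedBall z r ⊆ U) (θ : ℝ) :
    ∫ s in 0..r, log (r / s) * polarRadialPart ψ z s θ = ψ (circleMap z r θ) - ψ z := by
  have hmem {s : ℝ} (hs : s ∈ Icc 0 r) : circleMap z s θ ∈ U :=
    hsub (mapsTo_circleMap_closedBall z r univ (x := (s, θ)) ⟨hs, mem_univ θ⟩)
  have hW : ContinuousOn (fun s => circleMap z s θ) (Icc 0 r) := fun s _ =>
    (hasDerivAt_circleMap_radius z s θ).continuousAt.continuousWithinAt
  have hderiv : ∀ s ∈ Icc 0 r, HasDerivAt (fun s => ψ (circleMap z s θ))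
      (fderiv ℝ ψ (circleMap z s θ) (circleMap 0 1 θ)) s := fun s hs =>
    ((hψ.differentiableOn two_ne_zero).differentiableAt
      (hU.mem_nhds (hmem hs))).hasFDerivAt.comp_hasDerivAt s (hasDerivAt_circleMap_radius z s θ)
  have hderiv2 : ∀ s ∈ Icc 0 r, HasDerivAt
      (fun s => fderiv ℝ ψ (circleMap z s θ) (circleMap 0 1 θ))
      (fderiv ℝ (fderiv ℝ ψ) (circleMap z s θ) (circleMap 0 1 θ) (circleMap 0 1 θ)) s := by
    intro s hs
    have hD := (hasFDerivAt_fderiv_of_contDiffOn_two hψ hU (hmem hs)).comp_hasDerivAt s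
      (hasDerivAt_circleMap_radius z s θ)
    refine (hD.clm_apply (hasDerivAt_const s (circleMap 0 1 θ))).congr_deriv ?_
    rw [map_zero, add_zero]
  have hcont2 := (((continuousOn_fderiv_fderiv hψ hU).comp hW fun _ => hmem).clm_apply
    (continuousOn_const (c := circleMap 0 1 θ))).clm_apply
    (continuousOn_const (c := circleMap 0 1 θ))
  simpa only [polarRadialPart, circleMap_zero_radius, Function.const_apply] using
    integral_log_div_mul_deriv_id_mul_deriv hr hderiv hderiv2 hcont2

lemma integrableOn_log_div_mul_of_continuousOn (hr : 0 ≤ r) {a b : ℝ} {g : ℝ × ℝ → ℝ}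
    (hg : ContinuousOn g (Icc 0 r ×ˢ Icc a b)) :
    IntegrableOn (fun p => log (r / p.1) * g p) (Ioo 0 r ×ˢ Ioo a b) := by
  have hlog : IntegrableOn (fun s => log (r / s)) (Icc 0 r) :=
    (intervalIntegrable_iff_integrableOn_Icc_of_le hr).1 (intervalIntegrable_log_div r 0 r)
  have hlog_prod : IntegrableOn (fun p : ℝ × ℝ => log (r / p.1)) (Icc 0 r ×ˢ Icc a b) := by
    rw [IntegrableOn, Measure.volume_eq_prod, ← Measure.prod_restrict]
    exact hlog.comp_fst _
  exact (hlog_prod.mul_continuousOn hg (isCompact_Icc.prod isCompact_Icc)).mono_set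
    (prod_mono Ioo_subset_Icc_self Ioo_subset_Icc_self)

lemma setIntegral_prod_log_div_mul_polarRadialPart (hψ : ContDiffOn ℝ 2 ψ U) (hU : IsOpen U)
    (hr : 0 ≤ r) (hsub : closedBall z r ⊆ U)
    (hint : IntegrableOn (fun p => log (r / p.1) * polarRadialPart ψ z p.1 p.2)
      (Ioo 0 r ×ˢ Ioo (-π) π)) :
    ∫ p in Ioo 0 r ×ˢ Ioo (-π) π, log (r / p.1) * polarRadialPart ψ z p.1 p.2 =
      2 * π * (circleAverage ψ z r - ψ z) := by
  have hinner (θ : ℝ) : ∫ s in Ioo 0 r, log (r / s) * polarRadialPart ψ z s θ =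
      ψ (circleMap z r θ) - ψ z := by
    rw [← integral_Ioc_eq_integral_Ioo, ← intervalIntegral.integral_of_le hr,
      integral_log_div_mul_polarRadialPart hψ hU hr hsub]
  have hcircle : Continuous fun θ => ψ (circleMap z r θ) :=
    continuousOn_univ.1 <| hψ.continuousOn.comp (by fun_prop) fun θ _ =>
      hsub (circleMap_mem_closedBall z hr θ)
  have hcircle_int : IntegrableOn (fun θ => ψ (circleMap z r θ)) (Ioo (-π) π) :=
    hcircle.continuousOn.integrableOn_Icc.mono_set Ioo_subset_Icc_self
  rw [IntegrableOn, Measure.volume_eq_prod, ← Measure.prod_restrict] at hint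
  rw [Measure.volume_eq_prod, ← Measure.prod_restrict, integral_prod_symm _ hint]
  simp only [hinner]
  rw [integral_sub hcircle_int (integrable_const _), setIntegral_Ioo_circleMap, setIntegral_const,
    Real.volume_real_Ioo_of_le (by linarith [pi_pos])]
  simp only [smul_eq_mul]
  ring

lemma setIntegral_prod_log_div_mul_polarAngularPart (hψ : ContDiffOn ℝ 2 ψ U) (hU : IsOpen U)
    (hsub : closedBall z r ⊆ U)
    (hint : IntegrableOn (fun p => log (r / p.1) * polarAngularPart ψ z p.1 p.2)
      (Ioo 0 r ×ˢ Ioo (-π) π)) :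
    ∫ p in Ioo 0 r ×ˢ Ioo (-π) π, log (r / p.1) * polarAngularPart ψ z p.1 p.2 = 0 := by
  rw [Measure.volume_eq_prod, setIntegral_prod _ hint]
  refine setIntegral_eq_zero_of_forall_eq_zero fun s hs => ?_
  dsimp only
  rw [integral_const_mul, ← integral_Ioc_eq_integral_Ioo,
    ← intervalIntegral.integral_of_le (by linarith [pi_pos]),
    integral_polarAngularPart hψ hU hsub (Ioo_subset_Icc_self hs), mul_zero]

theorem setIntegral_log_div_mul_laplacian (hψ : ContDiffOn ℝ 2 ψ U) (hU : IsOpen U)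
    (hr : 0 ≤ r) (hsub : closedBall z r ⊆ U) :
    ∫ ζ in ball z r, log (r / ‖ζ - z‖) * laplacian ψ ζ =
      2 * π * (circleAverage ψ z r - ψ z) := by
  have hQ : MapsTo (fun p : ℝ × ℝ => circleMap z p.1 p.2) (Icc 0 r ×ˢ Icc (-π) π) U :=
    (mapsTo_circleMap_closedBall z r _).mono_right hsub
  have hradial := integrableOn_log_div_mul_of_continuousOn hr
    (continuousOn_polarRadialPart hψ hU hQ)
  have hangular := integrableOn_log_div_mul_of_continuousOn hr
    (continuousOn_polarAngularPart hψ hU hQ)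
  have hpolar : EqOn
      (fun p : ℝ × ℝ => p.1 • (log (r / ‖circleMap z p.1 p.2 - z‖) *
        laplacian ψ (circleMap z p.1 p.2)))
      (fun p => log (r / p.1) * polarRadialPart ψ z p.1 p.2 +
        log (r / p.1) * polarAngularPart ψ z p.1 p.2) (Ioo 0 r ×ˢ Ioo (-π) π) := by
    intro p hp
    have hnorm : ‖circleMap z p.1 p.2 - z‖ = p.1 := by
      simp [circleMap, abs_of_pos hp.1.1]
    have hmem : circleMap z p.1 p.2 ∈ U :=
      hQ (prod_mono Ioo_subset_Icc_self Ioo_subset_Icc_self hp)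
    simp only [smul_eq_mul, hnorm]
    rw [← mul_add, polarRadialPart_add_polarAngularPart hψ hU hmem]
    ring
  rw [setIntegral_ball_eq_setIntegral_polar,
    setIntegral_congr_fun (measurableSet_Ioo.prod measurableSet_Ioo) hpolar,
    integral_add hradial hangular,
    setIntegral_prod_log_div_mul_polarRadialPart hψ hU hr hsub hradial,
    setIntegral_prod_log_div_mul_polarAngularPart hψ hU hsub hangular, add_zero]

end JensenFormula

section LogarithmicPotential

lemma ofReal_exp_integral_le_laverage {α : Type*} [MeasurableSpace α] {ν : Measure α}
    [IsFiniteMeasure ν] [NeZero ν] {f : α → ℝ} {m : ℝ} (hf : ∀ x, 0 ≤ f x)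
    (hm : ν.real univ ≤ m) :
    ENNReal.ofReal (exp (∫ x, f x ∂ν)) ≤ ⨍⁻ x, ENNReal.ofReal (exp (m * f x)) ∂ν := by
  have hm0 : 0 ≤ m := measureReal_nonneg.trans hm
  rw [laverage_eq']
  by_cases hf_int : Integrable f ν
  swap
  · calc ENNReal.ofReal (exp (∫ x, f x ∂ν)) = ∫⁻ _, 1 ∂(ν univ)⁻¹ • ν := by
          rw [integral_undef hf_int, exp_zero, ENNReal.ofReal_one, lintegral_one, measure_univ]
      _ ≤ ∫⁻ x, ENNReal.ofReal (exp (m * f x)) ∂(ν univ)⁻¹ • ν :=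
          lintegral_mono fun x =>
            ENNReal.one_le_ofReal.2 (one_le_exp (mul_nonneg hm0 (hf x)))
  have hf_avg : Integrable f ((ν univ)⁻¹ • ν) := hf_int.to_average
  have hexp_meas : AEStronglyMeasurable (fun x => exp (m * f x)) ((ν univ)⁻¹ • ν) :=
    continuous_exp.comp_aestronglyMeasurable (hf_avg.1.const_mul m)
  by_cases hexp_top : ∫⁻ x, ENNReal.ofReal (exp (m * f x)) ∂(ν univ)⁻¹ • ν = ⊤
  · exact hexp_top ▸ le_top
  have hexp_int : Integrable (fun x => exp (m * f x)) ((ν univ)⁻¹ • ν) :=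
    (lintegral_ofReal_ne_top_iff_integrable hexp_meas
      (ae_of_all _ fun x => (exp_pos _).le)).1 hexp_top
  rw [← ofReal_integral_eq_lintegral_ofReal hexp_int (ae_of_all _ fun x => (exp_pos _).le)]
  refine ENNReal.ofReal_le_ofReal ?_
  calc exp (∫ x, f x ∂ν)
      = exp (ν.real univ * ∫ x, f x ∂(ν univ)⁻¹ • ν) := by
        rw [← average_eq', ← smul_eq_mul, measure_smul_average]
    _ ≤ exp (∫ x, m * f x ∂(ν univ)⁻¹ • ν) := by
        rw [integral_const_mul]
        gcongr
        exact integral_nonneg hf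
    _ ≤ ∫ x, exp (m * f x) ∂(ν univ)⁻¹ • ν :=
        convexOn_exp.map_integral_le continuous_exp.continuousOn isClosed_univ (by simp)
          (hf_avg.const_mul m) hexp_int

variable {E : Type*} [NormedAddCommGroup E] {m δ : ℝ}

lemma posLog_div_norm_eq_zero (hδ : 0 ≤ δ) {x : E} (hx : x ∉ ball (0 : E) δ) :
    log⁺ (δ / ‖x‖) = 0 := by
  rw [posLog_eq_zero_iff, abs_of_nonneg (by positivity)]
  exact div_le_one_of_le₀ (by simpa using hx) (norm_nonneg x)

variable [MeasurableSpace E]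

/-- The potential of the measure `ν` with respect to the logarithmic kernel truncated at distance
`δ`. -/
noncomputable def logPotential (ν : Measure E) (δ : ℝ) (z : E) : ℝ :=
  ∫ ζ, log⁺ (δ / ‖ζ - z‖) ∂ν

variable [BorelSpace E] [NormedSpace ℝ E] [FiniteDimensional ℝ E]
  {μ : Measure E} [μ.IsAddHaarMeasure]

lemma integrableOn_exp_mul_posLog_div_norm (hm0 : 0 ≤ m) (hm : m < Module.finrank ℝ E) :
    IntegrableOn (fun x : E => exp (m * log⁺ (δ / ‖x‖))) (ball 0 δ) μ := by
  have hdim : 1 ≤ Module.finrank ℝ E := by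
    exact_mod_cast (hm0.trans_lt hm)
  have : Nontrivial E := Module.nontrivial_of_finrank_pos hdim
  refine integrableOn_ball_of_norm_le_rpow hdim hm (C := δ ^ m) ?_
    (by fun_prop : Measurable _).aestronglyMeasurable
  filter_upwards [ae_restrict_mem measurableSet_ball,
    ae_restrict_of_ae (compl_mem_ae_iff.2 (measure_singleton (0 : E)))] with x hxδ hx0
  have hx : 0 < ‖x‖ := norm_pos_iff.2 hx0
  have hxδ : ‖x‖ < δ := mem_ball_zero_iff.1 hxδ
  have hratio : 1 < δ / ‖x‖ := (one_lt_div hx).2 hxδ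
  rw [norm_of_nonneg (exp_pos _).le, posLog_eq_log (hratio.le.trans (le_abs_self _)), mul_comm,
    ← rpow_def_of_pos (one_pos.trans hratio), div_rpow (hx.trans hxδ).le hx.le, rpow_neg hx.le,
    div_eq_mul_inv]

lemma integrable_posLog_div_norm [Nontrivial E] (μ : Measure E) [μ.IsAddHaarMeasure]
    (hδ : 0 ≤ δ) : Integrable (fun x : E => log⁺ (δ / ‖x‖)) μ := by
  have hdim : (1 / 2 : ℝ) < Module.finrank ℝ E := by
    have : (1 : ℝ) ≤ Module.finrank ℝ E := by exact_mod_cast Module.finrank_pos (R := ℝ) (M := E)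
    linarith
  have hball : IntegrableOn (fun x : E => log⁺ (δ / ‖x‖)) (ball 0 δ) μ := by
    refine ((integrableOn_exp_mul_posLog_div_norm (by norm_num) hdim).const_mul 2).mono'
      (by fun_prop : Measurable _).aestronglyMeasurable (ae_of_all _ fun x => ?_)
    rw [norm_of_nonneg posLog_nonneg]
    linarith [add_one_le_exp (1 / 2 * log⁺ (δ / ‖x‖))]
  refine (integrableOn_iff_integrable_of_support_subset fun x hx => ?_).1 hball
  exact not_imp_comm.1 (posLog_div_norm_eq_zero hδ) hx

lemma setLIntegral_exp_mul_posLog_le (hδ : 0 ≤ δ) (B : Set E) (ζ : E) :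
    ∫⁻ z in B, ENNReal.ofReal (exp (m * log⁺ (δ / ‖ζ - z‖))) ∂μ ≤
      μ B + ∫⁻ x in ball (0 : E) δ, ENNReal.ofReal (exp (m * log⁺ (δ / ‖x‖))) ∂μ := by
  set h : E → ENNReal := fun x => ENNReal.ofReal (exp (m * log⁺ (δ / ‖x‖)))
  have hle (x : E) : h x ≤ 1 + (ball (0 : E) δ).indicator h x := by
    by_cases hx : x ∈ ball (0 : E) δ
    · simp [hx]
    · simp [h, posLog_div_norm_eq_zero hδ hx]
  calc ∫⁻ z in B, h (ζ - z) ∂μ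
      ≤ ∫⁻ z in B, (1 + (ball (0 : E) δ).indicator h (ζ - z)) ∂μ :=
        lintegral_mono fun z => hle (ζ - z)
    _ = μ B + ∫⁻ z in B, (ball (0 : E) δ).indicator h (ζ - z) ∂μ := by
        rw [lintegral_add_left measurable_const, setLIntegral_one]
    _ ≤ μ B + ∫⁻ z, (ball (0 : E) δ).indicator h (ζ - z) ∂μ := by
        gcongr
        exact Measure.restrict_le_self
    _ = μ B + ∫⁻ x in ball (0 : E) δ, h x ∂μ := by
        rw [lintegral_sub_left_eq_self, lintegral_indicator measurableSet_ball]

/-- A Brezis–Merle inequality: by Jensen's inequality for the average over `ν`, it reduces to the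
local integrability of `‖x‖ ^ (-m)`. -/
theorem exists_setLIntegral_exp_logPotential_le (hm0 : 0 ≤ m) (hm : m < Module.finrank ℝ E)
    (hδ : 0 ≤ δ) {B : Set E} (hB : μ B ≠ ⊤) :
    ∃ K : ENNReal, K ≠ ⊤ ∧ ∀ ν : Measure E, IsFiniteMeasure ν → ν.real univ ≤ m →
      ∫⁻ z in B, ENNReal.ofReal (exp (logPotential ν δ z)) ∂μ ≤ K := by
  set K := μ B + ∫⁻ x in ball (0 : E) δ, ENNReal.ofReal (exp (m * log⁺ (δ / ‖x‖))) ∂μ with hK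
  refine ⟨K, ENNReal.add_ne_top.2 ⟨hB, ?_⟩, fun ν _ hν => ?_⟩
  · exact (integrableOn_exp_mul_posLog_div_norm hm0 hm).lintegral_lt_top.ne
  rcases eq_zero_or_neZero ν with rfl | _
  · simp [logPotential, hK]
  calc ∫⁻ z in B, ENNReal.ofReal (exp (logPotential ν δ z)) ∂μ
      ≤ ∫⁻ z in B, ∫⁻ ζ, ENNReal.ofReal (exp (m * log⁺ (δ / ‖ζ - z‖))) ∂(ν univ)⁻¹ • ν ∂μ :=
        lintegral_mono fun z => ofReal_exp_integral_le_laverage (fun _ => posLog_nonneg) hν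
    _ = ∫⁻ ζ, ∫⁻ z in B, ENNReal.ofReal (exp (m * log⁺ (δ / ‖ζ - z‖))) ∂μ ∂(ν univ)⁻¹ • ν :=
        lintegral_lintegral_swap (by fun_prop : Measurable _).aemeasurable
    _ ≤ ∫⁻ _, K ∂(ν univ)⁻¹ • ν :=
        lintegral_mono fun ζ => setLIntegral_exp_mul_posLog_le hδ B ζ
    _ = K := by rw [lintegral_const, measure_univ, mul_one]

end LogarithmicPotential

section RieszMeasure

variable {ψ : ℂ → ℝ} {U : Set ℂ} {c z : ℂ} {r t δ : ℝ}

/-- `ψ` is of class `C²` with nonnegative Laplacian on `U`, which should be open. -/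
structure IsC2SubharmonicOn (ψ : ℂ → ℝ) (U : Set ℂ) : Prop where
  contDiffOn : ContDiffOn ℝ 2 ψ U
  laplacian_nonneg : ∀ z ∈ U, 0 ≤ laplacian ψ z

/-- The Riesz measure `(2π)⁻¹ Δψ dA` of a `C²` subharmonic function `ψ`, whose logarithmic potential
differs from `-ψ` by a harmonic function. Where `Δψ < 0` the density is truncated to `0`. -/
noncomputable def rieszMeasure (ψ : ℂ → ℝ) : Measure ℂ :=
  volume.withDensity fun ζ => ENNReal.ofReal (laplacian ψ ζ / (2 * π))

lemma integrableOn_rieszMeasure (hψ : ContDiffOn ℝ 2 ψ U) (hU : IsOpen U) {K : Set ℂ}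
    (hK : IsCompact K) (hKU : K ⊆ U) {F : Type*} [NormedAddCommGroup F] {g : ℂ → F}
    (hg : IntegrableOn g K) :
    IntegrableOn g K (rieszMeasure ψ) := by
  obtain ⟨M, hM⟩ := hK.exists_bound_of_continuousOn ((continuousOn_laplacian hψ hU).mono hKU)
  refine hg.of_measure_le_smul (c := ENNReal.ofReal (M / (2 * π))) ENNReal.ofReal_ne_top ?_
  rw [rieszMeasure, restrict_withDensity hK.measurableSet, ← withDensity_const]
  refine withDensity_mono ?_
  filter_upwards [ae_restrict_mem hK.measurableSet] with ζ hζ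
  gcongr
  exact (le_abs_self _).trans (hM ζ hζ)

lemma isFiniteMeasure_rieszMeasure_restrict_ball (hψ : ContDiffOn ℝ 2 ψ U) (hU : IsOpen U)
    (hsub : closedBall c r ⊆ U) : IsFiniteMeasure ((rieszMeasure ψ).restrict (ball c r)) := by
  have hone : IntegrableOn (fun _ => (1 : ℝ)) (closedBall c r) (rieszMeasure ψ) :=
    integrableOn_rieszMeasure hψ hU (isCompact_closedBall c r) hsub
      (continuousOn_const.integrableOn_compact (isCompact_closedBall c r))
  exact (integrable_const_iff_isFiniteMeasure one_ne_zero).1 (hone.mono_set ball_subset_closedBall)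

lemma integrableOn_posLog_rieszMeasure (hψ : ContDiffOn ℝ 2 ψ U) (hU : IsOpen U)
    (hsub : closedBall c r ⊆ U) (hδ : 0 ≤ δ) (z : ℂ) :
    IntegrableOn (fun ζ => log⁺ (δ / ‖ζ - z‖)) (ball c r) (rieszMeasure ψ) :=
  (integrableOn_rieszMeasure hψ hU (isCompact_closedBall c r) hsub
    ((integrable_posLog_div_norm volume hδ).comp_sub_right z).integrableOn).mono_set
    ball_subset_closedBall

namespace IsC2SubharmonicOn

lemma setIntegral_rieszMeasure (hψ : IsC2SubharmonicOn ψ U) {S : Set ℂ} (hS : MeasurableSet S)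
    (hSU : S ⊆ U) (g : ℂ → ℝ) :
    ∫ ζ in S, g ζ ∂rieszMeasure ψ = (2 * π)⁻¹ * ∫ ζ in S, g ζ * laplacian ψ ζ := by
  rw [rieszMeasure, setIntegral_withDensity_eq_setIntegral_toReal_smul
    ((measurable_laplacian ψ).div_const _).ennreal_ofReal
    (ae_of_all _ fun _ => ENNReal.ofReal_lt_top) _ hS, ← integral_const_mul]
  refine setIntegral_congr_fun hS fun ζ hζ => ?_
  have hnonneg : 0 ≤ laplacian ψ ζ / (2 * π) :=
    div_nonneg (hψ.laplacian_nonneg ζ (hSU hζ)) two_pi_pos.le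
  simp only [ENNReal.toReal_ofReal hnonneg, smul_eq_mul]
  ring

theorem circleAverage_eq_add_logPotential (hψ : IsC2SubharmonicOn ψ U) (hU : IsOpen U)
    (hr : 0 ≤ r) (hsub : closedBall z r ⊆ U) {S : Set ℂ} (hS : MeasurableSet S)
    (hball : ball z r ⊆ S) :
    circleAverage ψ z r = ψ z + logPotential ((rieszMeasure ψ).restrict S) r z := by
  have hmem (ζ : ℂ) : ζ ∈ ball z r ↔ ζ - z ∈ ball (0 : ℂ) r := by
    rw [mem_ball_iff_norm, mem_ball_zero_iff]
  have hpotential : logPotential ((rieszMeasure ψ).restrict S) r z =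
      ∫ ζ in ball z r, log (r / ‖ζ - z‖) ∂rieszMeasure ψ := by
    rw [logPotential, setIntegral_eq_of_subset_of_forall_sdiff_eq_zero hS hball fun ζ hζ =>
      posLog_div_norm_eq_zero hr (mt (hmem ζ).2 hζ.2)]
    refine setIntegral_congr_fun measurableSet_ball fun ζ hζ => ?_
    rcases eq_or_ne ζ z with rfl | hne
    · simp
    have hpos : 0 < ‖ζ - z‖ := norm_sub_pos_iff.2 hne
    exact posLog_eq_log <|
      ((one_le_div hpos).2 (mem_ball_iff_norm.1 hζ).le).trans (le_abs_self _)
  rw [hpotential, hψ.setIntegral_rieszMeasure measurableSet_ball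
      (ball_subset_closedBall.trans hsub), setIntegral_log_div_mul_laplacian hψ.contDiffOn hU hr
      hsub, inv_mul_cancel_left₀ two_pi_pos.ne', add_sub_cancel]

lemma le_circleAverage (hψ : IsC2SubharmonicOn ψ U) (hU : IsOpen U) (hr : 0 ≤ r)
    (hsub : closedBall z r ⊆ U) : ψ z ≤ circleAverage ψ z r := by
  rw [hψ.circleAverage_eq_add_logPotential hU hr hsub measurableSet_ball subset_rfl]
  exact le_add_of_nonneg_right (integral_nonneg fun _ => posLog_nonneg)

lemma mul_le_setIntegral_ball (hψ : IsC2SubharmonicOn ψ U) (hU : IsOpen U) (hr : 0 ≤ r)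
    (hsub : closedBall z r ⊆ U) : π * r ^ 2 * ψ z ≤ ∫ ζ in ball z r, ψ ζ := by
  have hneg := setIntegral_ball_le_of_circleAverage_le (b := -ψ z) hr
    (hψ.contDiffOn.continuousOn.mono hsub).neg fun s hs => by
      rw [← neg_one_smul ℝ ψ, circleAverage_smul, neg_one_smul]
      exact neg_le_neg (hψ.le_circleAverage hU hs.1.le
        ((closedBall_subset_closedBall hs.2.le).trans hsub))
  simp only [Pi.neg_apply, integral_neg] at hneg
  linarith

lemma log_div_mul_measureReal_rieszMeasure_ball_le (hψ : IsC2SubharmonicOn ψ U) (hU : IsOpen U)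
    (hr : 0 ≤ r) (hsub : closedBall c r ⊆ U) (hnonpos : ∀ z ∈ U, ψ z ≤ 0) (htr : t ≤ r) :
    log (r / t) * (rieszMeasure ψ).real (ball c t) ≤ -ψ c := by
  have hpotential_int := integrableOn_posLog_rieszMeasure hψ.contDiffOn hU hsub hr c
  have : IsFiniteMeasure ((rieszMeasure ψ).restrict (ball c t)) :=
    isFiniteMeasure_rieszMeasure_restrict_ball hψ.contDiffOn hU
      ((closedBall_subset_closedBall htr).trans hsub)
  have hne_center : ∀ᵐ ζ ∂rieszMeasure ψ, ζ ≠ c :=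
    (withDensity_absolutelyContinuous _ _).ae_le (compl_mem_ae_iff.2 (measure_singleton c))
  have havg : circleAverage ψ c r ≤ 0 := by
    refine circleAverage_mono_on_of_le_circle
      ((hψ.contDiffOn.continuousOn.mono (sphere_subset_closedBall.trans hsub)).circleIntegrable hr)
      fun ζ hζ => hnonpos ζ (hsub (sphere_subset_closedBall ?_))
    rwa [abs_of_nonneg hr] at hζ
  calc log (r / t) * (rieszMeasure ψ).real (ball c t)
      = ∫ _ in ball c t, log (r / t) ∂rieszMeasure ψ := by
        rw [setIntegral_const, smul_eq_mul, mul_comm]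
    _ ≤ ∫ ζ in ball c t, log⁺ (r / ‖ζ - c‖) ∂rieszMeasure ψ := by
        refine integral_mono_ae (integrable_const _)
          (hpotential_int.mono_set (ball_subset_ball htr)) ?_
        filter_upwards [ae_restrict_mem measurableSet_ball, ae_restrict_of_ae hne_center]
          with ζ hζ hne
        have hpos : 0 < ‖ζ - c‖ := norm_sub_pos_iff.2 hne
        have hζt : ‖ζ - c‖ < t := mem_ball_iff_norm.1 hζ
        refine (log_le_log ?_ ?_).trans (le_max_right 0 _)
        · exact div_pos (by linarith) (by linarith)
        · gcongr
    _ ≤ logPotential ((rieszMeasure ψ).restrict (ball c r)) r c :=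
        setIntegral_mono_set hpotential_int (ae_of_all _ fun _ => posLog_nonneg)
          (ball_subset_ball htr).eventuallyLE
    _ ≤ -ψ c := by
        rw [hψ.circleAverage_eq_add_logPotential hU hr hsub measurableSet_ball subset_rfl] at havg
        linarith

lemma setIntegral_ball_le_add_logPotential (hψ : IsC2SubharmonicOn ψ U) (hU : IsOpen U)
    (hsub : closedBall c t ⊆ U) (hδ : 0 ≤ δ) (hclosed : closedBall z δ ⊆ closedBall c t)
    (hball : ball z δ ⊆ ball c t) :
    ∫ ζ in ball z δ, ψ ζ ≤
      π * δ ^ 2 * (ψ z + logPotential ((rieszMeasure ψ).restrict (ball c t)) δ z) := by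
  refine setIntegral_ball_le_of_circleAverage_le hδ
    (hψ.contDiffOn.continuousOn.mono (hclosed.trans hsub)) fun s hs => ?_
  rw [hψ.circleAverage_eq_add_logPotential hU hs.1.le
    ((closedBall_subset_closedBall hs.2.le).trans (hclosed.trans hsub)) measurableSet_ball
    ((ball_subset_ball hs.2.le).trans hball)]
  gcongr
  refine integral_mono (integrableOn_posLog_rieszMeasure hψ.contDiffOn hU hsub hs.1.le z)
    (integrableOn_posLog_rieszMeasure hψ.contDiffOn hU hsub hδ z) fun ζ => ?_
  exact posLog_le_posLog (div_nonneg hs.1.le (norm_nonneg _))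
    (div_le_div_of_nonneg_right hs.2.le (norm_nonneg _))

lemma neg_le_add_logPotential (hψ : IsC2SubharmonicOn ψ U) (hU : IsOpen U)
    (hsub : closedBall c t ⊆ U) (hnonpos : ∀ z ∈ U, ψ z ≤ 0) (hδ : 0 < δ)
    (hball : ball z δ ⊆ ball c t) :
    -ψ z ≤ -ψ c * (t / δ) ^ 2 + logPotential ((rieszMeasure ψ).restrict (ball c t)) δ z := by
  have ht : 0 < t := nonempty_ball.1 ((nonempty_ball.2 hδ).mono hball)
  have hclosed : closedBall z δ ⊆ closedBall c t := by
    simpa only [closure_ball _ hδ.ne', closure_ball _ ht.ne'] using closure_mono hball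
  have hψ_int : IntegrableOn (-ψ) (ball c t) :=
    ((hψ.contDiffOn.continuousOn.mono hsub).neg.integrableOn_compact
      (isCompact_closedBall c t)).mono_set ball_subset_closedBall
  have hψ_neg : 0 ≤ᵐ[volume.restrict (ball c t)] -ψ := by
    filter_upwards [ae_restrict_mem measurableSet_ball] with ζ hζ
    exact neg_nonneg.2 (hnonpos ζ (hsub (ball_subset_closedBall hζ)))
  have hmono : ∫ ζ in ball c t, ψ ζ ≤ ∫ ζ in ball z δ, ψ ζ := by
    simpa only [Pi.neg_apply, integral_neg, neg_le_neg_iff] using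
      setIntegral_mono_set hψ_int hψ_neg hball.eventuallyLE
  have hchain : ψ c * t ^ 2 ≤
      (ψ z + logPotential ((rieszMeasure ψ).restrict (ball c t)) δ z) * δ ^ 2 := by
    refine le_of_mul_le_mul_left ?_ pi_pos
    linarith [hψ.mul_le_setIntegral_ball hU ht.le hsub,
      hψ.setIntegral_ball_le_add_logPotential hU hsub hδ.le hclosed hball]
  rw [← div_le_iff₀ (by positivity), mul_div_assoc, ← div_pow] at hchain
  linarith

end IsC2SubharmonicOn

end RieszMeasure

section ExponentialIntegrability

lemma IsC2SubharmonicOn.setIntegral_exp_neg_le {ψ : ℂ → ℝ} {U : Set ℂ} {c : ℂ} {ρ t : ℝ}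
    {K : ENNReal} (hψ : IsC2SubharmonicOn ψ U) (hU : IsOpen U) (hsub : closedBall c t ⊆ U)
    (hnonpos : ∀ z ∈ U, ψ z ≤ 0) (hρt : ρ < t) (hK : K ≠ ⊤)
    (hle : ∫⁻ z in ball c ρ, ENNReal.ofReal
      (exp (logPotential ((rieszMeasure ψ).restrict (ball c t)) (t - ρ) z)) ≤ K) :
    ∫ z in ball c ρ, exp (-ψ z) ≤ exp (-ψ c * (t / (t - ρ)) ^ 2) * K.toReal := by
  set a := -ψ c * (t / (t - ρ)) ^ 2
  have hpointwise : ∀ z ∈ ball c ρ, ENNReal.ofReal ‖exp (-ψ z)‖ ≤ ENNReal.ofReal (exp a) *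
      ENNReal.ofReal (exp (logPotential ((rieszMeasure ψ).restrict (ball c t)) (t - ρ) z)) := by
    intro z hz
    rw [norm_of_nonneg (exp_pos _).le, ← ENNReal.ofReal_mul (exp_pos a).le, ← exp_add]
    gcongr
    refine hψ.neg_le_add_logPotential hU hsub hnonpos (sub_pos.2 hρt) (ball_subset_ball' ?_)
    linarith [mem_ball.1 hz]
  have hlintegral : ∫⁻ z in ball c ρ, ENNReal.ofReal ‖exp (-ψ z)‖ ≤ ENNReal.ofReal (exp a) * K :=
    (setLIntegral_mono' measurableSet_ball hpointwise).trans <| by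
      rw [lintegral_const_mul' _ _ ENNReal.ofReal_ne_top]
      gcongr
  calc ∫ z in ball c ρ, exp (-ψ z)
      ≤ (∫⁻ z in ball c ρ, ENNReal.ofReal ‖exp (-ψ z)‖).toReal :=
        (le_norm_self _).trans (norm_integral_le_lintegral_norm _)
    _ ≤ (ENNReal.ofReal (exp a) * K).toReal :=
        ENNReal.toReal_mono (ENNReal.mul_ne_top ENNReal.ofReal_ne_top hK) hlintegral
    _ = exp a * K.toReal := by
        rw [ENNReal.toReal_mul, ENNReal.toReal_ofReal (exp_pos a).le]

theorem stmt_0_general (c : ℂ) {A R ρ : ℝ} (hA : 0 ≤ A) (hR : 0 < R)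
    (hρ : ρ < exp (-(A / 2)) * R) :
    ∃ C : ℝ, 0 < C ∧ ∀ ψ : ℂ → ℝ, IsC2SubharmonicOn ψ (ball c R) → -A ≤ ψ c →
      (∀ z ∈ ball c R, ψ z ≤ 0) → ∫ z in ball c ρ, exp (-ψ z) ≤ C := by
  obtain ⟨t, hmax, htR⟩ := exists_between (max_lt hρ (by positivity : 0 < exp (-(A / 2)) * R))
  obtain ⟨hρt, ht⟩ := max_lt_iff.1 hmax
  rw [exp_neg, lt_inv_mul_iff₀ (exp_pos _)] at htR
  obtain ⟨r, htr, hrR⟩ := exists_between htR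
  have htr' : t ≤ r := (le_mul_of_one_le_left ht.le (one_le_exp (by positivity))).trans htr.le
  have hr : 0 < r := ht.trans_le htr'
  have hlog : A / 2 < log (r / t) :=
    (lt_log_iff_exp_lt (div_pos hr ht)).2 ((lt_div_iff₀ ht).2 htr)
  have hlog_pos : 0 < log (r / t) := by linarith
  obtain ⟨K, hK, hpotential⟩ := exists_setLIntegral_exp_logPotential_le
    (μ := (volume : Measure ℂ)) (m := A / log (r / t)) (δ := t - ρ) (B := ball c ρ)
    (by positivity)
    (by rw [Complex.finrank_real_complex, div_lt_iff₀ hlog_pos]; push_cast; linarith)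
    (sub_pos.2 hρt).le measure_ball_lt_top.ne
  refine ⟨exp (A * (t / (t - ρ)) ^ 2) * K.toReal + 1, by positivity, fun ψ hψ hψc hnonpos => ?_⟩
  have hsub : closedBall c r ⊆ ball c R := closedBall_subset_ball hrR
  have hsub' := (closedBall_subset_closedBall htr').trans hsub
  have hmass : ((rieszMeasure ψ).restrict (ball c t)).real univ ≤ A / log (r / t) := by
    rw [measureReal_restrict_apply_univ, le_div_iff₀' hlog_pos]
    linarith [hψ.log_div_mul_measureReal_rieszMeasure_ball_le isOpen_ball hr.le hsub hnonpos htr']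
  have hfinite := isFiniteMeasure_rieszMeasure_restrict_ball hψ.contDiffOn isOpen_ball hsub'
  calc ∫ z in ball c ρ, exp (-ψ z)
      ≤ exp (-ψ c * (t / (t - ρ)) ^ 2) * K.toReal :=
        hψ.setIntegral_exp_neg_le isOpen_ball hsub' hnonpos hρt hK (hpotential _ hfinite hmass)
    _ ≤ exp (A * (t / (t - ρ)) ^ 2) * K.toReal := by gcongr; linarith
    _ ≤ exp (A * (t / (t - ρ)) ^ 2) * K.toReal + 1 := by linarith

end ExponentialIntegrability

/-- For every `R > 0` and every `ρ` with `R/2 ≤ ρ < e^{-1/2} R`, there is a constant `C > 0`,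
depending only on `R` and `ρ`, such that every smooth subharmonic function `ψ` on the open disk
`B_R(0) ⊆ ℂ` with `ψ(0) ≥ -1` and `ψ ≤ 0` on `B_R(0)` satisfies `∫_{B_ρ(0)} e^{-ψ} dA ≤ C`. -/
theorem stmt_0 (R ρ : ℝ) (hR : 0 < R) (hρ₁ : R / 2 ≤ ρ) (hρ₂ : ρ < Real.exp (-(1/2)) * R) :
    ∃ C : ℝ, 0 < C ∧ ∀ ψ : ℂ → ℝ,
      ContDiffOn ℝ (⊤ : ℕ∞) ψ (Metric.ball (0 : ℂ) R) →
      (∀ z ∈ Metric.ball (0 : ℂ) R, 0 ≤ laplacian ψ z) →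
      -1 ≤ ψ 0 →
      (∀ z ∈ Metric.ball (0 : ℂ) R, ψ z ≤ 0) →
      ∫ z in Metric.ball (0 : ℂ) ρ, Real.exp (-ψ z) ≤ C := by
  obtain ⟨C, hC, hle⟩ := stmt_0_general 0 zero_le_one hR hρ₂
  exact ⟨C, hC, fun ψ hsmooth hlap => hle ψ ⟨contDiffOn_infty.1 hsmooth 2, hlap⟩⟩
end

section
/- Let R > 0 and let f : ℂ → ℝ be twice continuously differentiable on an open neighborhood of the closed disk of radius R centered at 0. Then for every z ∈ ℂ with |z| < R one has the Riesz (Poisson) representation f(z) = (1/2π) ∫_{B_R(0)} log( |Rz − Rζ| / |R² − z·conj(ζ)| ) · Δf(ζ) dA(ζ) + (1/2π) ∫_0^{2π} ((R² − |z|²)/|z − R e^{iθ}|²) · f(R e^{iθ}) dθ. -/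
open MeasureTheory

/-!
Integrating by parts twice against the smooth approximations `log √(‖ζ‖² + ε)` of `log ‖ζ‖`, whose
Laplacians `2ε / (‖ζ‖² + ε)²` concentrate at the origin with total mass `2π`, gives
`∫ log ‖w - ζ‖ Δg(ζ) dA(ζ) = 2π g(w)` for compactly supported `g` of class `C²`. Averaging this
identity in `w` over the circle against the Poisson kernel of `z` and subtracting the result from
the identity at `w = z` leaves the kernel `log ‖z - ζ‖ - P[log ‖· - ζ‖](z)`. It vanishes for `ζ`
outside the closed disk, where `log ‖· - ζ‖` is harmonic on the disk. For `ζ` inside, `log ‖· - ζ‖`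
has the same boundary values as the harmonic function `log (‖R² - · ζ̄‖ / R)`, and the kernel is the
Green function of the disk. A function that is `C²` only near the closed disk is first cut off.
-/

open Set Filter Topology Real Metric Module
open InnerProductSpace (HarmonicOnNhd harmonicAt_const)
open scoped RealInnerProductSpace Manifold

section Cutoff

variable {E F : Type*} [NormedAddCommGroup E] [NormedSpace ℝ E] [FiniteDimensional ℝ E]
  [NormedAddCommGroup F] [NormedSpace ℝ F]

theorem exists_contDiff_hasCompactSupport_eventuallyEq {n : ℕ∞} {f : E → F} {K U : Set E}
    (hf : ContDiffOn ℝ n f U) (hU : IsOpen U) (hK : IsCompact K) (hKU : K ⊆ U) :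
    ∃ g : E → F, ContDiff ℝ n g ∧ HasCompactSupport g ∧ g =ᶠ[𝓝ˢ K] f := by
  obtain ⟨L, hL, hKL, hLU⟩ := exists_compact_between hK hU hKU
  obtain ⟨χ, hχ_one, hχ_zero, -⟩ :=
    exists_contMDiffMap_one_nhds_of_subset_interior (n := n) 𝓘(ℝ, E) hK.isClosed hKL
  have hχ_supp : tsupport χ ⊆ L :=
    closure_minimal (fun x hx => by_contra fun hxL => hx (hχ_zero x hxL)) hL.isClosed
  have hg_supp : tsupport (fun x => χ x • f x) ⊆ L := (tsupport_smul_subset_left χ f).trans hχ_supp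
  refine ⟨fun x => χ x • f x, ?_, hL.of_isClosed_subset (isClosed_tsupport _) hg_supp,
    hχ_one.mono fun x hx => by simp [hx]⟩
  refine contMDiff_iff_contDiff.1 (contMDiff_of_tsupport fun x hx => ContDiffAt.contMDiffAt ?_)
  exact χ.contMDiff.contDiff.contDiffAt.smul (hf.contDiffAt (hU.mem_nhds (hLU (hg_supp hx))))

end Cutoff

section IteratedDirectionalDerivative

variable {E F : Type*} [NormedAddCommGroup E] [NormedSpace ℝ E]
  [NormedAddCommGroup F] [NormedSpace ℝ F] {f : E → F}

theorem contDiff_fderiv_apply_const {m n : WithTop ℕ∞} (hf : ContDiff ℝ n f) (hmn : m + 1 ≤ n)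
    (v : E) : ContDiff ℝ m fun x => fderiv ℝ f x v :=
  (hf.fderiv_right hmn).clm_apply contDiff_const

theorem continuous_fderiv_fderiv_apply (hf : ContDiff ℝ 2 f) (v : E) :
    Continuous fun x => fderiv ℝ (fun y => fderiv ℝ f y v) x v :=
  (contDiff_fderiv_apply_const (m := 0)
    (contDiff_fderiv_apply_const (m := 1) hf (by norm_num) v) (by norm_num) v).continuous

end IteratedDirectionalDerivative

section Laplacian

variable {f g : ℂ → ℝ}

theorem continuous_laplacian (hf : ContDiff ℝ 2 f) : Continuous (laplacian f) :=
  (continuous_fderiv_fderiv_apply hf 1).add (continuous_fderiv_fderiv_apply hf Complex.I)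

theorem hasCompactSupport_laplacian (hf : HasCompactSupport f) :
    HasCompactSupport (laplacian f) :=
  ((hf.fderiv_apply ℝ 1).fderiv_apply ℝ 1).add
    ((hf.fderiv_apply ℝ Complex.I).fderiv_apply ℝ Complex.I)

theorem laplacian_congr {z : ℂ} (h : f =ᶠ[𝓝 z] g) : laplacian f z = laplacian g z := by
  have fderiv_eq (v : ℂ) : (fun w => fderiv ℝ f w v) =ᶠ[𝓝 z] fun w => fderiv ℝ g w v :=
    h.fderiv.mono fun _ hw => DFunLike.congr_fun hw v
  simp only [laplacian, (fderiv_eq _).fderiv_eq]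

theorem laplacian_comp_add_left (f : ℂ → ℝ) (a z : ℂ) :
    laplacian (fun w => f (a + w)) z = laplacian f (a + z) := by
  simp only [laplacian, fderiv_comp_add_left a (f := f)]
  rw [fderiv_comp_add_left a (f := fun w => fderiv ℝ f w 1),
    fderiv_comp_add_left a (f := fun w => fderiv ℝ f w Complex.I)]

end Laplacian

section LocallyIntegrable

variable {E : Type*} [NormedAddCommGroup E] [NormedSpace ℝ E] [FiniteDimensional ℝ E]
  [MeasurableSpace E] [BorelSpace E] {μ : Measure E} [μ.IsAddHaarMeasure]

theorem locallyIntegrable_norm_inv (hE : 1 < finrank ℝ E) :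
    LocallyIntegrable (fun x : E => ‖x‖⁻¹) μ :=
  locallyIntegrable_of_norm_le_rpow (C := 1) (α := 1) hE.le (mod_cast hE)
    (ae_of_all _ fun x => by simp [rpow_neg_one]) measurable_norm.inv.aestronglyMeasurable

theorem abs_log_le_inv_add_self {t : ℝ} (ht : 0 ≤ t) : |log t| ≤ t⁻¹ + t := by
  rw [abs_le]
  constructor
  · linarith [neg_inv_le_log ht]
  · linarith [log_le_self ht, inv_nonneg.2 ht]

theorem locallyIntegrable_log_norm (hE : 1 < finrank ℝ E) :
    LocallyIntegrable (fun x : E => log ‖x‖) μ :=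
  ((locallyIntegrable_norm_inv hE).add continuous_norm.locallyIntegrable).mono
    (measurable_log.comp measurable_norm).aestronglyMeasurable
    (ae_of_all _ fun x => (abs_log_le_inv_add_self (norm_nonneg x)).trans (le_abs_self _))

end LocallyIntegrable

section IntegrationByParts

variable {E : Type*} [NormedAddCommGroup E] [NormedSpace ℝ E] [FiniteDimensional ℝ E]
  [MeasurableSpace E] [BorelSpace E] {μ : Measure E} [μ.IsAddHaarMeasure]

theorem integral_mul_fderiv_eq_neg_fderiv_mul_of_hasCompactSupport {u g : E → ℝ}
    (hu : ContDiff ℝ 1 u) (hg : ContDiff ℝ 1 g) (hgc : HasCompactSupport g) (v : E) :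
    ∫ x, u x * fderiv ℝ g x v ∂μ = -∫ x, fderiv ℝ u x v * g x ∂μ := by
  have continuous_deriv {h : E → ℝ} (hh : ContDiff ℝ 1 h) : Continuous fun x => fderiv ℝ h x v :=
    (contDiff_fderiv_apply_const (m := 0) hh (by norm_num) v).continuous
  apply integral_mul_fderiv_eq_neg_fderiv_mul_of_integrable
  · exact ((continuous_deriv hu).mul hg.continuous).integrable_of_hasCompactSupport
      hgc.mul_left
  · exact (hu.continuous.mul (continuous_deriv hg)).integrable_of_hasCompactSupport
      (hgc.fderiv_apply ℝ v).mul_left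
  · exact (hu.continuous.mul hg.continuous).integrable_of_hasCompactSupport hgc.mul_left
  · exact fun x _ => hu.differentiable one_ne_zero x
  · exact fun x _ => hg.differentiable one_ne_zero x

theorem integral_mul_fderiv_fderiv_eq_fderiv_fderiv_mul {u g : E → ℝ}
    (hu : ContDiff ℝ 2 u) (hg : ContDiff ℝ 2 g) (hgc : HasCompactSupport g) (v : E) :
    ∫ x, u x * fderiv ℝ (fun y => fderiv ℝ g y v) x v ∂μ =
      ∫ x, fderiv ℝ (fun y => fderiv ℝ u y v) x v * g x ∂μ := by
  have contDiff_deriv {h : E → ℝ} (hh : ContDiff ℝ 2 h) : ContDiff ℝ 1 fun x => fderiv ℝ h x v :=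
    contDiff_fderiv_apply_const hh (by norm_num) v
  rw [integral_mul_fderiv_eq_neg_fderiv_mul_of_hasCompactSupport (hu.of_le one_le_two)
      (contDiff_deriv hg) (hgc.fderiv_apply ℝ v),
    integral_mul_fderiv_eq_neg_fderiv_mul_of_hasCompactSupport (contDiff_deriv hu)
      (hg.of_le one_le_two) hgc, neg_neg]

theorem integral_mul_laplacian_eq_laplacian_mul {u g : ℂ → ℝ}
    (hu : ContDiff ℝ 2 u) (hg : ContDiff ℝ 2 g) (hgc : HasCompactSupport g) :
    ∫ z, u z * laplacian g z = ∫ z, laplacian u z * g z := by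
  have integrable_left (v : ℂ) :
      Integrable fun z => u z * fderiv ℝ (fun w => fderiv ℝ g w v) z v :=
    (hu.continuous.mul (continuous_fderiv_fderiv_apply hg v)).integrable_of_hasCompactSupport
      ((hgc.fderiv_apply ℝ v).fderiv_apply ℝ v).mul_left
  have integrable_right (v : ℂ) :
      Integrable fun z => fderiv ℝ (fun w => fderiv ℝ u w v) z v * g z :=
    ((continuous_fderiv_fderiv_apply hu v).mul hg.continuous).integrable_of_hasCompactSupport
      hgc.mul_left
  simp only [laplacian, mul_add, add_mul]
  rw [integral_add (integrable_left 1) (integrable_left Complex.I),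
    integral_add (integrable_right 1) (integrable_right Complex.I),
    integral_mul_fderiv_fderiv_eq_fderiv_fderiv_mul hu hg hgc,
    integral_mul_fderiv_fderiv_eq_fderiv_fderiv_mul hu hg hgc]

end IntegrationByParts

/-- The smooth approximation `log √(‖x‖² + ε)` of `log ‖x‖`, for `ε > 0`. -/
noncomputable def regularizedLog {E : Type*} [Norm E] (ε : ℝ) (x : E) : ℝ :=
  log (‖x‖ ^ 2 + ε) / 2

section RegularizedLog

variable {E : Type*} [NormedAddCommGroup E]

theorem tendsto_regularizedLog {x : E} (hx : x ≠ 0) :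
    Tendsto (fun ε => regularizedLog ε x) (𝓝[>] 0) (𝓝 (log ‖x‖)) := by
  have hcont : ContinuousAt (fun ε => regularizedLog ε x) 0 :=
    ((continuousAt_const.add continuousAt_id).log (by simpa using hx)).div_const 2
  have hzero : regularizedLog 0 x = log ‖x‖ := by simp [regularizedLog]
  exact hzero ▸ hcont.tendsto.mono_left nhdsWithin_le_nhds

theorem abs_regularizedLog_le {x : E} (hx : x ≠ 0) {ε : ℝ} (hε : ε ∈ Ioc 0 1) :
    |regularizedLog ε x| ≤ |log ‖x‖| + regularizedLog 1 x := by
  have hpos : 0 < ‖x‖ ^ 2 := by positivity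
  have hlower : log ‖x‖ ≤ regularizedLog ε x := by
    rw [regularizedLog, le_div_iff₀ two_pos, mul_comm, ← Nat.cast_ofNat, ← log_pow]
    exact log_le_log hpos (by linarith [hε.1])
  have hupper : regularizedLog ε x ≤ regularizedLog 1 x := by
    unfold regularizedLog
    gcongr
    · linarith [hε.1]
    · exact hε.2
  have hnonneg : 0 ≤ regularizedLog 1 x := div_nonneg (log_nonneg (by linarith)) zero_le_two
  rw [abs_le]
  constructor
  · linarith [neg_abs_le (log ‖x‖)]
  · linarith [abs_nonneg (log ‖x‖)]

variable [InnerProductSpace ℝ E]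

theorem contDiff_regularizedLog {n : WithTop ℕ∞} {ε : ℝ} (hε : 0 < ε) :
    ContDiff ℝ n (regularizedLog ε : E → ℝ) :=
  (((contDiff_norm_sq ℝ).add contDiff_const).log fun x => by positivity).div_const 2

theorem fderiv_regularizedLog {ε : ℝ} (hε : 0 < ε) (x v : E) :
    fderiv ℝ (regularizedLog ε) x v = ⟪x, v⟫ / (‖x‖ ^ 2 + ε) := by
  have hderiv := ((((hasStrictFDerivAt_norm_sq x).hasFDerivAt).add_const ε).log
    (by positivity)).mul_const (2⁻¹ : ℝ)
  have heq : regularizedLog ε = fun x : E => log (‖x‖ ^ 2 + ε) * 2⁻¹ := rfl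
  rw [heq, hderiv.fderiv]
  simp only [smul_apply, innerSL_apply_apply, smul_eq_mul, nsmul_eq_mul]
  field_simp
  push_cast
  ring

theorem fderiv_fderiv_regularizedLog {ε : ℝ} (hε : 0 < ε) (x v : E) :
    fderiv ℝ (fun y => fderiv ℝ (regularizedLog ε) y v) x v =
      ‖v‖ ^ 2 / (‖x‖ ^ 2 + ε) - 2 * ⟪x, v⟫ ^ 2 / (‖x‖ ^ 2 + ε) ^ 2 := by
  have hne : ‖x‖ ^ 2 + ε ≠ 0 := by positivity
  have hinv := (hasDerivAt_inv hne).comp_hasFDerivAt x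
    ((hasStrictFDerivAt_norm_sq x).hasFDerivAt.add_const ε)
  have hderiv := (innerSL ℝ v).hasFDerivAt.mul hinv
  have hfun : (fun y => fderiv ℝ (regularizedLog ε) y v) =
      ⇑(innerSL ℝ v) * (Inv.inv ∘ fun y => ‖y‖ ^ 2 + ε) := by
    ext y
    rw [fderiv_regularizedLog hε, real_inner_comm, div_eq_mul_inv]
    rfl
  rw [hfun, hderiv.fderiv]
  simp only [_root_.add_apply, smul_apply, innerSL_apply_apply, Function.comp_apply, smul_eq_mul,
    nsmul_eq_mul, real_inner_self_eq_norm_sq, real_inner_comm x v]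
  field_simp
  push_cast
  ring

theorem laplacian_regularizedLog {ε : ℝ} (hε : 0 < ε) (z : ℂ) :
    laplacian (regularizedLog ε) z = 2 * ε / (‖z‖ ^ 2 + ε) ^ 2 := by
  have hne : ‖z‖ ^ 2 + ε ≠ 0 := by positivity
  rw [laplacian, fderiv_fderiv_regularizedLog hε, fderiv_fderiv_regularizedLog hε]
  simp only [norm_one, one_pow, one_div, Complex.inner, one_mul, Complex.conj_re, Complex.norm_I,
    Complex.mul_re, Complex.I_re, zero_mul, Complex.I_im, Complex.conj_im, mul_neg, sub_neg_eq_add,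
    zero_add]
  field_simp
  rw [← Complex.normSq_eq_norm_sq, Complex.normSq_apply]
  ring

end RegularizedLog

section FundamentalSolution

theorem tendsto_integral_mul_of_locallyIntegrable_bound {X ι : Type*} [TopologicalSpace X]
    [T2Space X] [MeasurableSpace X] [OpensMeasurableSpace X] {μ : Measure X}
    {l : Filter ι} [l.IsCountablyGenerated] {φ : ι → X → ℝ} {φ₀ ψ h : X → ℝ}
    (hψ : LocallyIntegrable ψ μ) (hh : Continuous h) (hhc : HasCompactSupport h)
    (hmeas : ∀ᶠ i in l, AEStronglyMeasurable (φ i) μ)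
    (hbound : ∀ᶠ i in l, ∀ᵐ x ∂μ, |φ i x| ≤ ψ x)
    (hlim : ∀ᵐ x ∂μ, Tendsto (fun i => φ i x) l (𝓝 (φ₀ x))) :
    Tendsto (fun i => ∫ x, φ i x * h x ∂μ) l (𝓝 (∫ x, φ₀ x * h x ∂μ)) := by
  apply tendsto_integral_filter_of_dominated_convergence fun x => ψ x * ‖h x‖
  · exact hmeas.mono fun i hi => hi.mul hh.aestronglyMeasurable
  · filter_upwards [hbound] with i hi
    filter_upwards [hi] with x hx
    rw [norm_mul]
    exact mul_le_mul_of_nonneg_right hx (norm_nonneg _)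
  · simpa only [smul_eq_mul, mul_comm] using
      hψ.integrable_smul_left_of_hasCompactSupport hh.norm hhc.norm
  · exact hlim.mono fun x hx => hx.mul_const _

theorem tendsto_integral_regularizedLog_mul {E : Type*} [NormedAddCommGroup E]
    [InnerProductSpace ℝ E] [FiniteDimensional ℝ E] [MeasurableSpace E] [BorelSpace E]
    {μ : Measure E} [μ.IsAddHaarMeasure] (hE : 1 < finrank ℝ E) {h : E → ℝ}
    (hh : Continuous h) (hhc : HasCompactSupport h) :
    Tendsto (fun ε => ∫ x, regularizedLog ε x * h x ∂μ) (𝓝[>] 0)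
      (𝓝 (∫ x, log ‖x‖ * h x ∂μ)) := by
  have : Nontrivial E := nontrivial_of_finrank_pos (zero_lt_one.trans hE)
  have hcont {ε : ℝ} (hε : 0 < ε) : Continuous (regularizedLog ε : E → ℝ) :=
    (contDiff_regularizedLog (n := 0) hε).continuous
  have hlog : LocallyIntegrable (fun x : E => |log ‖x‖|) μ := fun x =>
    (locallyIntegrable_log_norm hE x).norm
  have hne : ∀ᵐ x ∂μ, x ≠ 0 := Measure.ae_ne μ 0
  apply tendsto_integral_mul_of_locallyIntegrable_bound
    (hlog.add (hcont one_pos).locallyIntegrable) hh hhc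
  · filter_upwards [self_mem_nhdsWithin] with ε hε using (hcont hε).aestronglyMeasurable
  · filter_upwards [Ioc_mem_nhdsGT one_pos] with ε hε
    filter_upwards [hne] with x hx using abs_regularizedLog_le hx hε
  · filter_upwards [hne] with x hx using tendsto_regularizedLog hx

theorem integral_Ioi_id_div_one_add_sq_sq : ∫ r in Ioi (0 : ℝ), r / (1 + r ^ 2) ^ 2 = 1 / 2 := by
  have hderiv (r : ℝ) : HasDerivAt (fun r : ℝ => -(1 + r ^ 2)⁻¹ / 2) (r / (1 + r ^ 2) ^ 2) r := by
    have hne : 1 + r ^ 2 ≠ 0 := by positivity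
    convert! (((hasDerivAt_pow 2 r).const_add 1).inv hne).neg.div_const 2 using 1
    field_simp
    push_cast
    ring
  have hlim : Tendsto (fun r : ℝ => -(1 + r ^ 2)⁻¹ / 2) atTop (𝓝 (-0 / 2)) :=
    (tendsto_atTop_add_const_left _ 1
      (tendsto_pow_atTop two_ne_zero)).inv_tendsto_atTop.neg.div_const 2
  rw [integral_Ioi_of_hasDerivAt_of_nonneg' (fun r _ => hderiv r)
    (fun r hr => div_nonneg (le_of_lt hr) (sq_nonneg _)) hlim]
  norm_num

theorem integral_inv_one_add_norm_sq_sq : ∫ z : ℂ, ((1 + ‖z‖ ^ 2) ^ 2)⁻¹ = π := by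
  rw [integral_fun_norm_addHaar volume fun r => ((1 + r ^ 2) ^ 2)⁻¹, Complex.finrank_real_complex]
  have hball : volume.real (ball (0 : ℂ) 1) = π := by
    simp [Measure.real, Complex.volume_ball]
  simp only [hball, Nat.add_one_sub_one, pow_one, smul_eq_mul, ← div_eq_mul_inv,
    integral_Ioi_id_div_one_add_sq_sq, nsmul_eq_mul]
  push_cast
  ring

theorem tendsto_integral_laplacian_regularizedLog_mul {g : ℂ → ℝ} (hg : Integrable g)
    (hg0 : ContinuousAt g 0) :
    Tendsto (fun ε => ∫ z, laplacian (regularizedLog ε) z * g z) (𝓝[>] 0) (𝓝 (2 * π * g 0)) := by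
  have hmass : ∫ z : ℂ, (π * (1 + ‖z‖ ^ 2) ^ 2)⁻¹ = 1 := by
    simp only [mul_inv, integral_const_mul, integral_inv_one_add_norm_sq_sq]
    exact inv_mul_cancel₀ pi_ne_zero
  have hdecay : Tendsto (fun z : ℂ => ‖z‖ ^ finrank ℝ ℂ * (π * (1 + ‖z‖ ^ 2) ^ 2)⁻¹)
      (Bornology.cobounded ℂ) (𝓝 0) := by
    refine squeeze_zero (fun z => by positivity) (fun z => ?_)
      (tendsto_atTop_add_const_left _ 1 ((tendsto_pow_atTop two_ne_zero).comp
        tendsto_norm_cobounded_atTop)).inv_tendsto_atTop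
    rw [Complex.finrank_real_complex]
    simp only [Pi.inv_apply, Function.comp_apply, ← div_eq_mul_inv]
    rw [div_le_iff₀ (by positivity)]
    field_simp
    nlinarith [pi_gt_three, sq_nonneg ‖z‖]
  have hpeak := (tendsto_integral_comp_smul_smul_of_integrable
    (fun z => by positivity) hmass hdecay hg hg0).const_mul (2 * π)
  have hscale : Tendsto (fun ε : ℝ => √ε⁻¹) (𝓝[>] 0) atTop :=
    tendsto_sqrt_atTop.comp tendsto_inv_nhdsGT_zero
  refine (hpeak.comp hscale).congr' ?_
  filter_upwards [self_mem_nhdsWithin] with ε (hε : 0 < ε)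
  simp only [Function.comp_apply, ← integral_const_mul]
  refine integral_congr_ae (ae_of_all _ fun z => ?_)
  have hne : ‖z‖ ^ 2 + ε ≠ 0 := by positivity
  simp only [laplacian_regularizedLog hε, Complex.finrank_real_complex, norm_smul, mul_pow,
    Real.norm_of_nonneg (sqrt_nonneg _), sq_sqrt (inv_nonneg.2 hε.le), smul_eq_mul]
  field_simp
  ring

theorem integral_log_norm_mul_laplacian {g : ℂ → ℝ} (hg : ContDiff ℝ 2 g)
    (hgc : HasCompactSupport g) : ∫ z, log ‖z‖ * laplacian g z = 2 * π * g 0 := by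
  have hE : 1 < finrank ℝ ℂ := by simp
  refine tendsto_nhds_unique_of_eventuallyEq
    (tendsto_integral_regularizedLog_mul hE (continuous_laplacian hg)
      (hasCompactSupport_laplacian hgc))
    (tendsto_integral_laplacian_regularizedLog_mul
      (hg.continuous.integrable_of_hasCompactSupport hgc) hg.continuous.continuousAt) ?_
  filter_upwards [self_mem_nhdsWithin] with ε hε
  exact integral_mul_laplacian_eq_laplacian_mul (contDiff_regularizedLog hε) hg hgc

theorem integral_log_norm_sub_mul_laplacian {g : ℂ → ℝ} (hg : ContDiff ℝ 2 g)
    (hgc : HasCompactSupport g) (w : ℂ) :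
    ∫ ζ, log ‖w - ζ‖ * laplacian g ζ = 2 * π * g w := by
  have hg' : ContDiff ℝ 2 fun z => g (w + z) := hg.comp (contDiff_const.add contDiff_id)
  have hgc' : HasCompactSupport fun z => g (w + z) := hgc.comp_homeomorph (Homeomorph.addLeft w)
  calc ∫ ζ, log ‖w - ζ‖ * laplacian g ζ
      = ∫ ζ, log ‖w - (w + ζ)‖ * laplacian g (w + ζ) := (integral_add_left_eq_self _ w).symm
    _ = ∫ ζ, log ‖ζ‖ * laplacian (fun z => g (w + z)) ζ := by
        simp only [sub_add_cancel_left, norm_neg, laplacian_comp_add_left]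
    _ = 2 * π * g w := by
        rw [integral_log_norm_mul_laplacian hg' hgc', add_zero]

end FundamentalSolution

section Fubini

section CircleAverage

variable {X : Type*} [MeasurableSpace X] {μ : Measure X} [SFinite μ]

theorem integrable_circleAverage_of_integrable_prod {g : X → ℂ → ℝ} {c : ℂ} {R : ℝ}
    (hg : Integrable (fun p : ℝ × X => g p.2 (circleMap c R p.1))
      ((volume.restrict (uIoc 0 (2 * π))).prod μ)) :
    Integrable (fun x => circleAverage (g x) c R) μ := by
  have := hg.integral_prod_right
  rw [uIoc_of_le two_pi_pos.le] at this
  simp only [circleAverage_def, intervalIntegral.integral_of_le two_pi_pos.le]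
  exact this.smul (2 * π)⁻¹

theorem integral_circleAverage_comm {g : X → ℂ → ℝ} {c : ℂ} {R : ℝ}
    (hg : Integrable (fun p : ℝ × X => g p.2 (circleMap c R p.1))
      ((volume.restrict (uIoc 0 (2 * π))).prod μ)) :
    ∫ x, circleAverage (g x) c R ∂μ = circleAverage (fun w => ∫ x, g x w ∂μ) c R := by
  simp only [circleAverage_def, integral_smul]
  rw [intervalIntegral_integral_swap hg]

end CircleAverage

variable {E : Type*} [NormedAddCommGroup E] [NormedSpace ℝ E] [FiniteDimensional ℝ E]
  [MeasurableSpace E] [BorelSpace E] {μ : Measure E} [μ.IsAddHaarMeasure]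
  {φ L : E → ℝ}

theorem integrable_comp_sub_left_mul_of_hasCompactSupport (hφ : LocallyIntegrable φ μ)
    (hL : Continuous L) (hLc : HasCompactSupport L) (w : E) :
    Integrable (fun x => φ (w - x) * L x) μ := by
  have hLw : HasCompactSupport fun x => L (w - x) := hLc.comp_homeomorph (Homeomorph.subLeft w)
  simpa [mul_comm] using (hφ.integrable_smul_left_of_hasCompactSupport
    (hL.comp (continuous_const.sub continuous_id)) hLw).comp_sub_left w

theorem continuous_integral_norm_comp_sub_left_mul (hφ : LocallyIntegrable φ μ)
    (hL : Continuous L) (hLc : HasCompactSupport L) :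
    Continuous fun w => ∫ x, ‖φ (w - x) * L x‖ ∂μ := by
  have hnorm : LocallyIntegrable (fun x => ‖φ x‖) μ := fun x => (hφ x).norm
  have hconv := hLc.norm.continuous_convolution_right (ContinuousLinearMap.mul ℝ ℝ) hnorm hL.norm
  refine hconv.congr fun w => ?_
  simp only [convolution_mul_swap, norm_mul]

theorem integrable_prod_mul_comp_sub_mul {T : Type*} [MeasurableSpace T] {ν : Measure T}
    [SFinite ν] {k : T → ℝ} {γ : T → E} {K : Set E} (hk : Integrable k ν) (hγ : Measurable γ)
    (hK : IsCompact K) (hγK : ∀ t, γ t ∈ K)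
    (hφ : LocallyIntegrable φ μ) (hL : Continuous L) (hLc : HasCompactSupport L) :
    Integrable (fun p : T × E => k p.1 * (φ (γ p.1 - p.2) * L p.2)) (ν.prod μ) := by
  have hsub : Measure.QuasiMeasurePreserving (fun p : T × E => γ p.1 - p.2) (ν.prod μ) μ :=
    QuasiMeasurePreserving.prod_of_right ((hγ.comp measurable_fst).sub measurable_snd)
      (ae_of_all _ fun t => quasiMeasurePreserving_sub_left μ (γ t))
  have hmeas : AEStronglyMeasurable (fun p : T × E => k p.1 * (φ (γ p.1 - p.2) * L p.2))
      (ν.prod μ) :=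
    hk.aestronglyMeasurable.comp_fst.mul ((hφ.aestronglyMeasurable.comp_quasiMeasurePreserving
      hsub).mul hL.aestronglyMeasurable.comp_snd)
  obtain ⟨C, hC⟩ := hK.exists_bound_of_continuousOn
    (continuous_integral_norm_comp_sub_left_mul hφ hL hLc).continuousOn
  rw [integrable_prod_iff hmeas]
  refine ⟨ae_of_all _ fun t =>
    (integrable_comp_sub_left_mul_of_hasCompactSupport hφ hL hLc (γ t)).const_mul (k t), ?_⟩
  refine (hk.norm.mul_const C).mono' hmeas.norm.integral_prod_right' (ae_of_all _ fun t => ?_)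
  simp only [norm_mul (k t), integral_const_mul]
  rw [norm_mul, norm_norm]
  exact mul_le_mul_of_nonneg_left (hC _ (hγK t)) (norm_nonneg _)

end Fubini

section Poisson

variable {c z ζ : ℂ} {R : ℝ}

theorem norm_norm_sq_sub_mul_conj (u v : ℂ) :
    ‖(‖u‖ : ℂ) ^ 2 - u * starRingEnd ℂ v‖ = ‖u‖ * ‖u - v‖ := by
  rw [← Complex.mul_conj', ← mul_sub, ← map_sub, norm_mul, Complex.norm_conj]

theorem sq_sub_mul_conj_ne_zero {w ζ : ℂ} (hw : ‖w‖ ≤ R) (hζ : ‖ζ‖ < R) :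
    (R : ℂ) ^ 2 - w * starRingEnd ℂ ζ ≠ 0 := by
  have hR : 0 < R := (norm_nonneg ζ).trans_lt hζ
  have hlt : ‖w * starRingEnd ℂ ζ‖ < ‖(R : ℂ) ^ 2‖ := by
    rw [norm_mul, Complex.norm_conj, norm_pow, Complex.norm_of_nonneg hR.le, sq]
    exact mul_lt_mul' hw hζ (norm_nonneg ζ) hR
  exact fun h => hlt.ne' (congrArg norm (sub_eq_zero.1 h))

theorem continuousOn_poissonKernel_sphere (hz : z ∈ ball c R) :
    ContinuousOn (poissonKernel c z) (sphere c R) := by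
  unfold poissonKernel
  refine ContinuousOn.div (by fun_prop) (by fun_prop) fun w hw h => ?_
  have hwz : w = z := by simpa [sub_eq_zero] using h
  exact (mem_ball.1 hz).ne (hwz ▸ hw)

theorem integrable_poissonKernel_circleMap (hz : z ∈ ball c R) :
    Integrable (fun θ => poissonKernel c z (circleMap c R θ))
      (volume.restrict (uIoc 0 (2 * π))) :=
  intervalIntegrable_iff.1 <| ((continuousOn_poissonKernel_sphere hz).comp_continuous
    (continuous_circleMap c R)
    (circleMap_mem_sphere c (pos_of_mem_ball hz).le)).intervalIntegrable _ _

theorem circleAverage_poissonKernel_mul_log_norm_sub_of_notMem_closedBall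
    (hz : z ∈ ball c R) (hζ : ζ ∉ closedBall c R) :
    circleAverage (fun w => poissonKernel c z w * log ‖w - ζ‖) c R = log ‖z - ζ‖ := by
  refine HarmonicOnNhd.circleAverage_poissonKernel_smul (f := fun w => log ‖w - ζ‖)
    (fun w hw => ?_) hz
  exact AnalyticAt.harmonicAt_log_norm (f := fun w => w - ζ) (by fun_prop)
    (sub_ne_zero.2 (ne_of_mem_of_not_mem hw hζ))

-- On the circle, `log ‖w - ζ‖` agrees with a function that is harmonic in `w` on the whole disk:
-- the singularity is reflected to the point symmetric to `ζ`.
theorem circleAverage_poissonKernel_mul_log_norm_sub_of_mem_ball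
    (hz : z ∈ ball c R) (hζ : ζ ∈ ball c R) :
    circleAverage (fun w => poissonKernel c z w * log ‖w - ζ‖) c R =
      log ‖(R : ℂ) ^ 2 - (z - c) * starRingEnd ℂ (ζ - c)‖ - log R := by
  have hR : 0 < R := pos_of_mem_ball hz
  have harmonic : HarmonicOnNhd
      (fun w => log ‖(R : ℂ) ^ 2 - (w - c) * starRingEnd ℂ (ζ - c)‖ - log R)
      (closedBall c R) := fun w hw =>
    (AnalyticAt.harmonicAt_log_norm
      (f := fun w => (R : ℂ) ^ 2 - (w - c) * starRingEnd ℂ (ζ - c)) (by fun_prop)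
      (sq_sub_mul_conj_ne_zero (mem_closedBall_iff_norm.1 hw) (mem_ball_iff_norm.1 hζ))).sub
      (harmonicAt_const _)
  rw [← harmonic.circleAverage_poissonKernel_smul hz]
  refine circleAverage_congr_sphere fun w hw => ?_
  rw [abs_of_pos hR, mem_sphere_iff_norm] at hw
  have hwζ : ‖w - ζ‖ ≠ 0 := fun h => by
    rw [norm_sub_eq_zero_iff] at h
    exact (mem_ball_iff_norm.1 hζ).ne (h ▸ hw)
  have hreflect := norm_norm_sq_sub_mul_conj (w - c) (ζ - c)
  rw [hw, sub_sub_sub_cancel_right] at hreflect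
  simp only [Pi.smul_apply', smul_eq_mul, hreflect, log_mul hR.ne' hwζ, add_sub_cancel_left]

/-- The Green function of the disk `ball c R` with pole `z`, normalised so that it is nonpositive
and its Laplacian is `2π` times the Dirac mass at `z`. -/
noncomputable def diskGreen (c : ℂ) (R : ℝ) (z ζ : ℂ) : ℝ :=
  log (‖(R : ℂ) * z - R * ζ‖ / ‖(R : ℂ) ^ 2 - (z - c) * starRingEnd ℂ (ζ - c)‖)

theorem diskGreen_eq_log_sub_log (hz : z ∈ ball c R) (hζ : ζ ∈ ball c R) (hne : ζ ≠ z) :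
    diskGreen c R z ζ =
      log ‖z - ζ‖ - (log ‖(R : ℂ) ^ 2 - (z - c) * starRingEnd ℂ (ζ - c)‖ - log R) := by
  have hR : 0 < R := pos_of_mem_ball hz
  have hzζ : ‖z - ζ‖ ≠ 0 := norm_ne_zero_iff.2 (sub_ne_zero.2 hne.symm)
  have hden := norm_ne_zero_iff.2
    (sq_sub_mul_conj_ne_zero (mem_ball_iff_norm.1 hz).le (mem_ball_iff_norm.1 hζ))
  rw [diskGreen, ← mul_sub, norm_mul, Complex.norm_of_nonneg hR.le,
    log_div (mul_ne_zero hR.ne' hzζ) hden, log_mul hR.ne' hzζ]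
  ring

theorem log_norm_sub_sub_circleAverage_ae_eq_indicator_diskGreen (hz : z ∈ ball c R) :
    (fun ζ => log ‖z - ζ‖ - circleAverage (fun w => poissonKernel c z w * log ‖w - ζ‖) c R)
      =ᵐ[volume] (ball c R).indicator (diskGreen c R z) := by
  have notMem_sphere : ∀ᵐ ζ : ℂ, ζ ∉ sphere c R :=
    measure_eq_zero_iff_ae_notMem.1 (Measure.addHaar_sphere _ _ _)
  filter_upwards [notMem_sphere, Measure.ae_ne volume z] with ζ hsphere hne
  by_cases hζ : ζ ∈ ball c R
  · rw [indicator_of_mem hζ, diskGreen_eq_log_sub_log hz hζ hne,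
      circleAverage_poissonKernel_mul_log_norm_sub_of_mem_ball hz hζ]
  · have hζ' : ζ ∉ closedBall c R := by
      rw [← ball_union_sphere]
      exact not_or.2 ⟨hζ, hsphere⟩
    rw [indicator_of_notMem hζ,
      circleAverage_poissonKernel_mul_log_norm_sub_of_notMem_closedBall hz hζ', sub_self]

end Poisson

section RieszRepresentation

variable {c z : ℂ} {R : ℝ}

theorem integrable_poissonKernel_mul_log_norm_sub_mul {L : ℂ → ℝ} (hz : z ∈ ball c R)
    (hL : Continuous L) (hLc : HasCompactSupport L) :
    Integrable (fun p : ℝ × ℂ => poissonKernel c z (circleMap c R p.1) *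
      (log ‖circleMap c R p.1 - p.2‖ * L p.2))
      ((volume.restrict (uIoc 0 (2 * π))).prod volume) :=
  integrable_prod_mul_comp_sub_mul (φ := fun w => log ‖w‖)
    (integrable_poissonKernel_circleMap hz) (continuous_circleMap c R).measurable
    (isCompact_sphere c R) (circleMap_mem_sphere c (pos_of_mem_ball hz).le)
    (locallyIntegrable_log_norm (by simp)) hL hLc

theorem circleAverage_mul_const (f : ℂ → ℝ) (a : ℝ) :
    circleAverage (fun w => f w * a) c R = circleAverage f c R * a := by
  simp only [circleAverage_def, intervalIntegral.integral_mul_const, smul_eq_mul, mul_assoc]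

theorem two_pi_mul_circleAverage_poissonKernel_mul {g : ℂ → ℝ} (hg : ContDiff ℝ 2 g)
    (hgc : HasCompactSupport g) (hz : z ∈ ball c R) :
    2 * π * circleAverage (fun w => poissonKernel c z w * g w) c R =
      ∫ ζ, circleAverage (fun w => poissonKernel c z w * log ‖w - ζ‖) c R * laplacian g ζ := by
  have hprod := integrable_poissonKernel_mul_log_norm_sub_mul hz (continuous_laplacian hg)
    (hasCompactSupport_laplacian hgc)
  rw [mul_comm (2 * π)]
  simp only [← circleAverage_mul_const, mul_assoc]
  rw [integral_circleAverage_comm hprod]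
  simp only [integral_const_mul, integral_log_norm_sub_mul_laplacian hg hgc]
  refine circleAverage_congr_sphere fun w _ => ?_
  ring

theorem eq_integral_diskGreen_mul_laplacian_add_circleAverage {g : ℂ → ℝ} (hg : ContDiff ℝ 2 g)
    (hgc : HasCompactSupport g) (hz : z ∈ ball c R) :
    g z = (2 * π)⁻¹ * (∫ ζ in ball c R, diskGreen c R z ζ * laplacian g ζ) +
      circleAverage (fun w => poissonKernel c z w * g w) c R := by
  have hL := continuous_laplacian hg
  have hLc := hasCompactSupport_laplacian hgc
  have hlog : Integrable fun ζ => log ‖z - ζ‖ * laplacian g ζ :=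
    integrable_comp_sub_left_mul_of_hasCompactSupport (locallyIntegrable_log_norm (by simp))
      hL hLc z
  have hpoisson : Integrable fun ζ =>
      circleAverage (fun w => poissonKernel c z w * log ‖w - ζ‖) c R * laplacian g ζ := by
    simpa only [← circleAverage_mul_const, mul_assoc] using
      integrable_circleAverage_of_integrable_prod
        (integrable_poissonKernel_mul_log_norm_sub_mul hz hL hLc)
  have hgreen : ∫ ζ in ball c R, diskGreen c R z ζ * laplacian g ζ =
      2 * π * g z - 2 * π * circleAverage (fun w => poissonKernel c z w * g w) c R := by
    rw [← integral_log_norm_sub_mul_laplacian hg hgc z,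
      two_pi_mul_circleAverage_poissonKernel_mul hg hgc hz, ← integral_sub hlog hpoisson,
      ← integral_indicator measurableSet_ball]
    refine integral_congr_ae ?_
    filter_upwards [log_norm_sub_sub_circleAverage_ae_eq_indicator_diskGreen hz] with ζ hζ
    rw [indicator_mul_left, ← hζ, sub_mul]
  rw [hgreen]
  field_simp
  ring

theorem stmt_2_general {f : ℂ → ℝ} {U : Set ℂ} (hU : IsOpen U) (hcU : closedBall c R ⊆ U)
    (hf : ContDiffOn ℝ 2 f U) (hz : z ∈ ball c R) :
    f z = (2 * π)⁻¹ * (∫ ζ in ball c R, diskGreen c R z ζ * laplacian f ζ) +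
      circleAverage (fun w => poissonKernel c z w * f w) c R := by
  obtain ⟨g, hg, hgc, hgf⟩ := exists_contDiff_hasCompactSupport_eventuallyEq (n := 2)
    hf hU (isCompact_closedBall c R) hcU
  have hnhds {w : ℂ} (hw : w ∈ closedBall c R) : g =ᶠ[𝓝 w] f :=
    hgf.filter_mono (nhds_le_nhdsSet hw)
  rw [← (hnhds (ball_subset_closedBall hz)).eq_of_nhds,
    eq_integral_diskGreen_mul_laplacian_add_circleAverage hg hgc hz]
  congr 1
  · congr 1
    refine setIntegral_congr_fun measurableSet_ball fun ζ hζ => ?_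
    simp only [laplacian_congr (hnhds (ball_subset_closedBall hζ))]
  · refine circleAverage_congr_sphere fun w hw => ?_
    rw [abs_of_pos (pos_of_mem_ball hz)] at hw
    simp only [(hnhds (sphere_subset_closedBall hw)).eq_of_nhds]

end RieszRepresentation

/-- Riesz (Poisson) representation formula on the disk of radius `R`:
if `f` is `C²` on an open neighborhood `U` of the closed disk of radius `R`, then for `|z| < R`,
`f(z) = (1/2π) ∫_{B_R(0)} log(|Rz − Rζ|/|R² − z ζ̄|) Δf(ζ) dA(ζ)
      + (1/2π) ∫_0^{2π} ((R² − |z|²)/|z − R e^{iθ}|²) f(R e^{iθ}) dθ`. -/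
theorem stmt_2 (R : ℝ) (hR : 0 < R) (f : ℂ → ℝ) (U : Set ℂ) (hU : IsOpen U)
    (hUR : Metric.closedBall (0 : ℂ) R ⊆ U) (hf : ContDiffOn ℝ 2 f U)
    (z : ℂ) (hz : ‖z‖ < R) :
    f z =
      (1 / (2 * Real.pi)) *
        (∫ ζ in Metric.ball (0 : ℂ) R,
          Real.log (‖(R : ℂ) * z - (R : ℂ) * ζ‖ /
              ‖(R : ℂ) ^ 2 - z * (starRingEnd ℂ) ζ‖) * laplacian f ζ) +
      (1 / (2 * Real.pi)) *
        ∫ θ in (0 : ℝ)..(2 * Real.pi),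
          ((R ^ 2 - ‖z‖ ^ 2) /
              ‖z - (R : ℂ) * Complex.exp (θ * Complex.I)‖ ^ 2) *
            f ((R : ℂ) * Complex.exp (θ * Complex.I)) := by
  rw [stmt_2_general hU hUR hf (mem_ball_zero_iff.2 hz), circleAverage_def]
  simp only [diskGreen, poissonKernel, circleMap, sub_zero, zero_add, one_div, smul_eq_mul]
  simp [abs_of_pos hR, norm_sub_rev z]
end
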